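/- Let X be a non-arithmetic real random variable with E|X| = ∞ satisfying condition (Ha), and let C(θ) = Re(1/(1-φ(θ))). Then ∫₀^1 C(θ) dθ < ∞ if and only if ∫_{x₀}^∞ H(x)/A²(x) dx < ∞ (condition (Hb)); and in that case ∫₀^θ C(u) du ∼ (π/2) ∫_{1/θ}^∞ H(x)/A²(x) dx as θ → 0+. -/

import Mathlib

/-!
Substituting `s = 1/u` turns `∫₀^θ C(u) du` into `∫_{1/θ}^∞ s⁻² C(1/s) ds`. Write
`c(s) = E[1 - cos(X/s)]` and `B = 1/A²`. Since `C = Re(1-φ) / |1-φ|²`, the integrand is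
asymptotic to `B(s) c(s)`: the real and imaginary parts of `1 - φ(1/s)` differ from `0` and
`-A(s)/s` by at most `2 V(s)/s²`, where `V(s) = E[min(|X|, s)²]`, and (Ha) forces
`V(s) = o(s A(s))` (`HaCond.tendsto_truncVar`, `HaCond.re_inv_asymp`).

The heart of the argument is the comparison of `L(x) = ∫_x^∞ B(s) c(s) ds` with
`R(x) = ∫_x^∞ B(s) H(s) ds`. Both are averages over `y = |X|` of `∫_x^∞ B(s) g(s/y) ds`, with
`g(t) = 1 - cos(1/t)` in the first case and `g = 1_{(0,1)}` in the second. Because `A` varies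
slowly, this integral is `(∫₀^∞ g + o(1)) y B(y)` as `x` and `y/x` tend to infinity, and it is at
most a constant times `y² B(x)/x` in any case (`IsKernel.asymp`, `IsKernel.integral_le`). The two
values of `∫₀^∞ g` are `π/2` and `1`, whence `L = (π/2 + o(1)) R + O(B(x) V(x) / x)`
(`kerInt_compare`, `lintegral_compare`).

The error is `o(1/A(x))`, and `1/A(x) ≤ 4 R(x)` (`inv_Af_le`): either `A` stays below `2 A(x)`
beyond `x`, and then `R(x) = ∞` because `∫ H = E|X| = ∞`, or `A` first reaches `2 A(x)` at some
`y`, and then `∫_x^y H ≥ ∫_x^y K = A(x)`. Hence `∫₀^θ C = (π/2 + o(1)) R(1/θ)`, as an identity in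
`[0, ∞]` (`reInt_compare`), which contains both the equivalence and the asymptotic relation: away
from `0` the function `C` is continuous, since `φ(θ) ≠ 1` for a non-arithmetic law.

All improper integrals are handled as `ℝ≥0∞`-valued integrals, so that divergence needs no
separate treatment.
-/

open MeasureTheory Filter Set Asymptotics Topology

/-- Tail of a distribution: `1 - F(x) = P[X > x]`. -/
noncomputable def tailF (μ : Measure ℝ) (x : ℝ) : ℝ := (μ (Set.Ioi x)).toReal

/-- A function is slowly varying at infinity. -/
def SlowlyVarying (f : ℝ → ℝ) : Prop :=
  (∀ᶠ x in atTop, 0 < f x) ∧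
    ∀ c : ℝ, 1 < c → Tendsto (fun x => f (c * x) / f x) atTop (𝓝 1)

/-- Two-sided tail `H(x) = P[|X| > x] = 1 - F(x) + F(-x-0)`. -/
noncomputable def Hf (μ : Measure ℝ) (x : ℝ) : ℝ := (μ {y : ℝ | x < |y|}).toReal

/-- `K(x) = P[X > x] - P[X < -x] = 1 - F(x) - F(-x-0)`. -/
noncomputable def Kf (μ : Measure ℝ) (x : ℝ) : ℝ :=
  (μ (Set.Ioi x)).toReal - (μ (Set.Iio (-x))).toReal

/-- `A(x) = ∫₀ˣ K(t) dt`. -/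
noncomputable def Af (μ : Measure ℝ) (x : ℝ) : ℝ := ∫ t in (0:ℝ)..x, Kf μ t

/-- `ℓ(x) = ∫₀ˣ H(t) dt`. -/
noncomputable def ellH (μ : Measure ℝ) (x : ℝ) : ℝ := ∫ t in (0:ℝ)..x, Hf μ t

/-- `m(x)`, defined by `1/m(x) = ∫ₓ^∞ H(t)/A²(t) dt`. -/
noncomputable def mF (μ : Measure ℝ) (x : ℝ) : ℝ :=
  (∫ t in Set.Ioi x, Hf μ t / (Af μ t) ^ 2)⁻¹

/-- `r₊(x) = ∫ₓ^∞ (1-F(t))/A²(t) dt`. -/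
noncomputable def rPlus (μ : Measure ℝ) (x : ℝ) : ℝ :=
  ∫ t in Set.Ioi x, tailF μ t / (Af μ t) ^ 2

/-- `r₋(x) = ∫ₓ^∞ F(-t)/A²(t) dt`. -/
noncomputable def rMinus (μ : Measure ℝ) (x : ℝ) : ℝ :=
  ∫ t in Set.Ioi x, (μ (Set.Iio (-t))).toReal / (Af μ t) ^ 2

/-- Condition (Ha): `A(x)/(x H(x)) → ∞`, i.e. positive relative stability. -/
def HaCond (μ : Measure ℝ) : Prop :=
  Tendsto (fun x => Af μ x / (x * Hf μ x)) atTop atTop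

/-- Condition (Hb): `∫_{x₀}^∞ H(x)/A²(x) dx < ∞` for some `x₀ > 0`
with `A` positive on `[x₀, ∞)`. -/
def HbCond (μ : Measure ℝ) : Prop :=
  ∃ x₀ : ℝ, 0 < x₀ ∧ (∀ x ≥ x₀, 0 < Af μ x) ∧
    IntegrableOn (fun x => Hf μ x / (Af μ x) ^ 2) (Set.Ioi x₀)

/-- `X` is arithmetic: `X/h ∈ ℤ` almost surely for some `h > 0`. -/
def IsArith (μ : Measure ℝ) : Prop :=
  ∃ h : ℝ, 0 < h ∧ μ {x : ℝ | ∃ n : ℤ, x = n * h} = 1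

/-- Characteristic function `φ(θ) = E[e^{iθX}]`. -/
noncomputable def charF (μ : Measure ℝ) (θ : ℝ) : ℂ :=
  ∫ x, Complex.exp (Complex.I * θ * x) ∂μ

/-! ### Slow variation and Potter bounds -/

/-- Increments of `A` over `[x, y]` are `o(A(x)) (y - x)/x`, uniformly in `y ≥ x`, and `A` is
eventually positive. For continuously differentiable `A` this amounts to `x A'(x)/A(x) → 0`, and
it is the form of slow variation that (Ha) yields directly. -/
def SlowInc (A : ℝ → ℝ) : Prop :=
  ∀ ε : ℝ, 0 < ε → ∃ x₀ : ℝ, 0 < x₀ ∧ ∀ x ≥ x₀, 0 < A x ∧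
    ∀ y ≥ x, |A y - A x| ≤ ε * A x * ((y - x) / x)

/-- `A` is positive on `[x₀, ∞)` and there `A(y)/A(x)` lies between `(y/x)^(-1/4)` and
`(y/x)^(1/4)` for `x ≤ y`; fourth powers are cleared to keep the inequalities polynomial. -/
def IsPotter (A : ℝ → ℝ) (x₀ : ℝ) : Prop :=
  0 < x₀ ∧ (∀ x ≥ x₀, 0 < A x) ∧ ∀ x y, x₀ ≤ x → x ≤ y →
    A y ^ 4 * x ≤ A x ^ 4 * y ∧ x * A x ^ 4 ≤ y * A y ^ 4

/-- A transitive relation which holds over every interval of ratio at most `2` holds over every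
interval. -/
lemma doubling_induction {x₀ : ℝ} (hx₀ : 0 < x₀) {P : ℝ → ℝ → Prop}
    (htrans : ∀ x y z, x₀ ≤ x → x ≤ y → y ≤ z → P x y → P y z → P x z)
    (hloc : ∀ x y, x₀ ≤ x → x ≤ y → y ≤ 2 * x → P x y) :
    ∀ x y, x₀ ≤ x → x ≤ y → P x y := by
  have key : ∀ n : ℕ, ∀ x y, x₀ ≤ x → x ≤ y → y ≤ 2 ^ n * x → P x y := by
    intro n
    induction n with
    | zero => intro x y h1 h2 h3; exact hloc x y h1 h2 (by simp at h3; linarith)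
    | succ n ih =>
      intro x y h1 h2 h3
      by_cases h : y ≤ 2 * x
      · exact hloc x y h1 h2 h
      · push Not at h
        refine htrans x (2 * x) y h1 (by linarith) h.le
          (hloc x (2 * x) h1 (by linarith) le_rfl) (ih _ _ (by linarith) h.le ?_)
        rw [pow_succ] at h3; linarith
  intro x y h1 h2
  have hx : 0 < x := by linarith
  obtain ⟨n, hn⟩ := pow_unbounded_of_one_lt (y / x) (one_lt_two)
  exact key n x y h1 h2 (by rw [div_lt_iff₀ hx] at hn; exact hn.le)

lemma SlowInc.exists_potter {A : ℝ → ℝ} (hA : SlowInc A) : ∃ x₀, IsPotter A x₀ := by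
  -- `1/16` is small enough that `(1 + k/16)^4 ≤ 1 + k` and `(1 - k/16)^4 (1 + k) ≥ 1` on `[0, 1]`.
  obtain ⟨x₀, hx₀, h⟩ := hA (1 / 16) (by norm_num)
  refine ⟨x₀, hx₀, fun x hx => (h x hx).1, doubling_induction hx₀ ?_ ?_⟩
  · rintro x y z hx hxy hyz ⟨h1, h2⟩ ⟨h3, h4⟩
    refine ⟨?_, h2.trans h4⟩
    have hy : 0 < y := by linarith
    have : A z ^ 4 * x * y ≤ A x ^ 4 * z * y := by
      nlinarith [mul_le_mul_of_nonneg_left h1 (by linarith : 0 ≤ z),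
        mul_le_mul_of_nonneg_left h3 (by linarith : 0 ≤ x)]
    exact le_of_mul_le_mul_right this hy
  · intro x y hx hxy hy
    obtain ⟨hAx, hd⟩ := h x hx
    have hx0 : 0 < x := by linarith
    have hAy := (h y (by linarith)).1
    have hd := abs_le.1 (hd y hxy)
    obtain ⟨k, hk⟩ : ∃ k, k = (y - x) / x := ⟨_, rfl⟩
    rw [← hk] at hd
    have hyk : y = x * (1 + k) := by rw [hk]; field_simp; ring
    have hk0 : 0 ≤ k := by rw [hk]; exact div_nonneg (by linarith) hx0.le
    have hk1 : k ≤ 1 := by rw [hk, div_le_one hx0]; linarith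
    have u1 : A y ≤ A x * (1 + k / 16) := by linarith
    have u2 : A x * (1 - k / 16) ≤ A y := by linarith
    have v1 : A y ^ 4 ≤ A x ^ 4 * (1 + k / 16) ^ 4 := by
      rw [← mul_pow]; exact pow_le_pow_left₀ hAy.le u1 4
    have v2 : A x ^ 4 * (1 - k / 16) ^ 4 ≤ A y ^ 4 := by
      rw [← mul_pow]; exact pow_le_pow_left₀ (mul_nonneg hAx.le (by linarith)) u2 4
    have w1 : (1 + k / 16) ^ 4 ≤ 1 + k := by
      have e1 : (1 + k / 16) ^ 2 ≤ 1 + k / 4 := by nlinarith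
      have e2 : ((1 + k / 16) ^ 2) ^ 2 ≤ (1 + k / 4) ^ 2 := pow_le_pow_left₀ (by positivity) e1 2
      nlinarith
    have w2 : 1 ≤ (1 - k / 16) ^ 4 * (1 + k) := by
      have e1 : 1 - k / 8 ≤ (1 - k / 16) ^ 2 := by nlinarith
      have e2 : (1 - k / 8) ^ 2 ≤ ((1 - k / 16) ^ 2) ^ 2 :=
        pow_le_pow_left₀ (by linarith) e1 2
      have e3 : 1 - k / 4 ≤ (1 - k / 16) ^ 4 := by nlinarith
      have e4 := mul_le_mul_of_nonneg_right e3 (by linarith : 0 ≤ 1 + k)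
      nlinarith
    have hA4 : 0 < A x ^ 4 := by positivity
    constructor
    · have h1 := mul_le_mul_of_nonneg_left w1 hA4.le
      calc A y ^ 4 * x ≤ A x ^ 4 * (1 + k) * x :=
            mul_le_mul_of_nonneg_right (v1.trans h1) hx0.le
        _ = A x ^ 4 * y := by rw [hyk]; ring
    · have h1 := mul_le_mul_of_nonneg_left w2 hA4.le
      have h2 := mul_le_mul_of_nonneg_right v2 (by linarith : 0 ≤ 1 + k)
      have h3 := mul_le_mul_of_nonneg_left (show A x ^ 4 ≤ A y ^ 4 * (1 + k) by nlinarith) hx0.le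
      calc x * A x ^ 4 ≤ x * (A y ^ 4 * (1 + k)) := h3
        _ = y * A y ^ 4 := by rw [hyk]; ring

lemma IsPotter.mono {A : ℝ → ℝ} {x₀ x₁ : ℝ} (h : IsPotter A x₀) (h1 : x₀ ≤ x₁) : IsPotter A x₁ :=
  ⟨h.1.trans_le h1, fun x hx => h.2.1 x (h1.trans hx), fun x y hx => h.2.2 x y (h1.trans hx)⟩

lemma IsPotter.inv_sq_le_of_le {A : ℝ → ℝ} {x₀ : ℝ} (h : IsPotter A x₀) {s y : ℝ} (hy : x₀ ≤ y)
    (hs : y ≤ s) : (A s ^ 2)⁻¹ ≤ (A y ^ 2)⁻¹ * √(s / y) := by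
  obtain ⟨h0, hpos, hp⟩ := h
  have hAs := hpos s (by linarith)
  have hAy := hpos y hy
  have hy0 : 0 < y := by linarith
  have h2 := (hp y s hy hs).2
  have : A y ^ 2 ≤ A s ^ 2 * √(s / y) := by
    rw [← abs_of_pos (pow_pos hAy 2), ← Real.sqrt_sq_eq_abs]
    rw [← abs_of_pos (pow_pos hAs 2), ← Real.sqrt_sq_eq_abs, ← Real.sqrt_mul (by positivity)]
    apply Real.sqrt_le_sqrt
    rw [← mul_div_assoc, le_div_iff₀ hy0]
    nlinarith
  rw [inv_mul_eq_div, le_div_iff₀ (by positivity), inv_mul_le_iff₀ (by positivity)]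
  exact this

lemma IsPotter.inv_sq_le_of_ge {A : ℝ → ℝ} {x₀ : ℝ} (h : IsPotter A x₀) {s y : ℝ} (hs : x₀ ≤ s)
    (hy : s ≤ y) : (A s ^ 2)⁻¹ ≤ (A y ^ 2)⁻¹ * √(y / s) := by
  obtain ⟨h0, hpos, hp⟩ := h
  have hAs := hpos s (by linarith)
  have hAy := hpos y (by linarith)
  have hs0 : 0 < s := by linarith
  have h2 := (hp s y hs hy).1
  have : A y ^ 2 ≤ A s ^ 2 * √(y / s) := by
    rw [← abs_of_pos (pow_pos hAy 2), ← Real.sqrt_sq_eq_abs]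
    rw [← abs_of_pos (pow_pos hAs 2), ← Real.sqrt_sq_eq_abs, ← Real.sqrt_mul (by positivity)]
    apply Real.sqrt_le_sqrt
    rw [← mul_div_assoc, le_div_iff₀ hs0]
    nlinarith
  rw [inv_mul_eq_div, le_div_iff₀ (by positivity), inv_mul_le_iff₀ (by positivity)]
  exact this

/-- Two-sided form: the weight `1/A²` changes by at most the square root of the ratio. -/
lemma IsPotter.inv_sq_le {A : ℝ → ℝ} {x₀ : ℝ} (h : IsPotter A x₀) {s y : ℝ} (hs : x₀ ≤ s)
    (hy : x₀ ≤ y) : (A s ^ 2)⁻¹ ≤ (A y ^ 2)⁻¹ * (√(s / y) + √(y / s)) := by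
  rw [mul_add]
  rcases le_total y s with h1 | h1
  · exact (h.inv_sq_le_of_le hy h1).trans (le_add_of_nonneg_right (by positivity))
  · exact (h.inv_sq_le_of_ge hs h1).trans (le_add_of_nonneg_left (by positivity))

/-- For `t ≥ 1` this is read off the increments; for `t < 1` apply it with `1/t` at `y t`. -/
lemma SlowInc.tendsto_ratio {A : ℝ → ℝ} (hA : SlowInc A) {t : ℝ} (ht : 0 < t) :
    Tendsto (fun y => A (y * t) / A y) atTop (𝓝 1) := by
  have key : ∀ c : ℝ, 1 ≤ c → Tendsto (fun y => A (y * c) / A y) atTop (𝓝 1) := by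
    intro c hc
    rw [Metric.tendsto_atTop]
    intro ε hε
    obtain ⟨x₀, hx₀, h⟩ := hA (ε / (2 * c)) (by positivity)
    refine ⟨x₀, fun y hy => ?_⟩
    obtain ⟨hAy, hd⟩ := h y hy
    have hy0 : 0 < y := by linarith
    have h1 := hd (y * c) (by nlinarith)
    rw [Real.dist_eq, div_sub_one hAy.ne', abs_div, abs_of_pos hAy, div_lt_iff₀ hAy]
    refine h1.trans_lt ?_
    have : (y * c - y) / y = c - 1 := by field_simp
    rw [this]
    have : ε / (2 * c) * A y * (c - 1) = ε * A y * ((c - 1) / (2 * c)) := by field_simp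
    rw [this]
    have : (c - 1) / (2 * c) < 1 := by rw [div_lt_one (by positivity)]; linarith
    have h3 : 0 < ε * A y := by positivity
    nlinarith
  rcases le_total 1 t with h | h
  · exact key t h
  · have h1 := key t⁻¹ ((one_le_inv₀ ht).2 h)
    have h2 := h1.comp (tendsto_id.atTop_mul_const ht)
    have h3 := h2.inv₀ one_ne_zero
    simp only [inv_one] at h3
    refine h3.congr fun y => ?_
    simp only [Function.comp, id]
    rw [mul_assoc, mul_inv_cancel₀ ht.ne', mul_one, inv_div]

lemma SlowInc.tendsto_inv_sq_ratio {A : ℝ → ℝ} (hA : SlowInc A) {t : ℝ} (ht : 0 < t) :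
    Tendsto (fun y => (A (y * t) ^ 2)⁻¹ / (A y ^ 2)⁻¹) atTop (𝓝 1) := by
  have := ((hA.tendsto_ratio ht).pow 2).inv₀ (by norm_num)
  simp only [one_pow, inv_one] at this
  refine this.congr fun y => ?_
  rw [div_pow, inv_div, inv_div_inv]

lemma IsPotter.tendsto_mul_atTop {A : ℝ → ℝ} {x₀ : ℝ} (h : IsPotter A x₀) :
    Tendsto (fun x => x * A x) atTop atTop := by
  obtain ⟨h0, hpos, hp⟩ := h
  have hc : 0 < x₀ * A x₀ ^ 4 := mul_pos h0 (pow_pos (hpos _ le_rfl) 4)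
  rw [tendsto_atTop]
  intro b
  have h3 : Tendsto (fun x : ℝ => x ^ 3 * (x₀ * A x₀ ^ 4)) atTop atTop :=
    (tendsto_pow_atTop (by norm_num)).atTop_mul_const hc
  filter_upwards [h3.eventually_ge_atTop (|b| ^ 4), eventually_ge_atTop x₀] with x h1 h2
  have hx : 0 < x := by linarith
  have h4 := (hp x₀ x le_rfl h2).2
  have h5 : |b| ^ 4 ≤ (x * A x) ^ 4 := by
    refine h1.trans ?_
    have := mul_le_mul_of_nonneg_left h4 (by positivity : 0 ≤ x ^ 3)
    calc _ ≤ _ := this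
      _ = _ := by ring
  exact (le_abs_self b).trans
    (le_of_pow_le_pow_left₀ (by norm_num) (mul_nonneg hx.le (hpos x h2).le) h5)

/-! ### Mellin-type integrals against a slowly varying weight -/

/-- A nonnegative measurable function on the half-line bounded by `G · min(1, t⁻²)`. -/
structure IsKernel (g : ℝ → ℝ) (G : ℝ) : Prop where
  meas : Measurable g
  pos : 0 < G
  nonneg : ∀ t, 0 ≤ g t
  le : ∀ t, 0 < t → g t ≤ G
  le_sq : ∀ t, 0 < t → g t ≤ G / t ^ 2

lemma sqrt_div_sq {s : ℝ} (hs : 0 < s) : √s / s ^ 2 = s ^ (-(3 / 2) : ℝ) := by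
  rw [Real.sqrt_eq_rpow, ← Real.rpow_natCast, ← Real.rpow_sub hs]; norm_num

/-- Dominating function for `IsKernel.asymp`, coming from the Potter bound for the weight. -/
lemma IsKernel.integrableOn_bound {g : ℝ → ℝ} {G : ℝ} (hg : IsKernel g G) :
    IntegrableOn (fun t => (√t + √(1 / t)) * g t) (Ioi 0) := by
  have hm : Measurable (fun t => (√t + √(1 / t)) * g t) := by
    have := hg.meas
    fun_prop
  rw [← Ioc_union_Ioi_eq_Ioi (zero_le_one' ℝ)]
  refine IntegrableOn.union ?_ ?_
  · have h1 : IntegrableOn (fun t : ℝ => 2 * G * t ^ (-(1 / 2) : ℝ)) (Ioc 0 1) := by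
      refine Integrable.const_mul ?_ _
      have := intervalIntegral.intervalIntegrable_rpow' (a := 0) (b := 1)
        (show (-1 : ℝ) < -(1 / 2) by norm_num)
      rwa [intervalIntegrable_iff_integrableOn_Ioc_of_le zero_le_one] at this
    refine Integrable.mono' h1 hm.aestronglyMeasurable ?_
    filter_upwards [ae_restrict_mem measurableSet_Ioc] with t ht
    have e : √(1 / t) = t ^ (-(1 / 2) : ℝ) := by
      rw [one_div, Real.sqrt_inv, Real.sqrt_eq_rpow, Real.rpow_neg ht.1.le]
    have h2 : √t ≤ √(1 / t) := by
      apply Real.sqrt_le_sqrt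
      rw [le_div_iff₀ ht.1]; nlinarith [ht.1, ht.2]
    rw [Real.norm_of_nonneg (mul_nonneg (by positivity) (hg.nonneg t)), ← e]
    have := mul_le_mul (by linarith : √t + √(1 / t) ≤ 2 * √(1 / t)) (hg.le t ht.1) (hg.nonneg t)
      (by positivity)
    linarith
  · have h1 : IntegrableOn (fun t : ℝ => 2 * G * t ^ (-(3 / 2) : ℝ)) (Ioi 1) :=
      (integrableOn_Ioi_rpow_of_lt (by norm_num) one_pos).const_mul _
    refine Integrable.mono' h1 hm.aestronglyMeasurable ?_
    filter_upwards [ae_restrict_mem measurableSet_Ioi] with t ht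
    have ht1 : 1 < t := ht
    have ht0 : 0 < t := by linarith
    have h2 : √(1 / t) ≤ √t := by
      apply Real.sqrt_le_sqrt
      rw [div_le_iff₀ ht0]; nlinarith
    rw [Real.norm_of_nonneg (mul_nonneg (by positivity) (hg.nonneg t)), ← sqrt_div_sq ht0]
    have := mul_le_mul (by linarith : √t + √(1 / t) ≤ 2 * √t) (hg.le_sq t ht0) (hg.nonneg t)
      (by positivity)
    calc _ ≤ _ := this
      _ = _ := by ring

lemma IsKernel.pointwise_le {g : ℝ → ℝ} {G : ℝ} (hg : IsKernel g G) {A : ℝ → ℝ} {x₀ : ℝ}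
    (hA : IsPotter A x₀) {x y s : ℝ} (hx : x₀ ≤ x) (hy : 0 < y) (hs : x ≤ s) :
    (A s ^ 2)⁻¹ * g (s / y) ≤ (G * (A x ^ 2)⁻¹ * y ^ 2 / √x) * s ^ (-(3 / 2) : ℝ) := by
  have hx0 : 0 < x := hA.1.trans_le hx
  have hs0 : 0 < s := hx0.trans_le hs
  have h1 := hA.inv_sq_le_of_le hx hs
  have h2 := hg.le_sq (s / y) (by positivity)
  have hG := hg.pos
  have := mul_le_mul h1 h2 (hg.nonneg _) (by positivity)
  refine this.trans_eq ?_
  rw [← sqrt_div_sq hs0, Real.sqrt_div hs0.le]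
  field_simp

lemma IsKernel.integrableOn {g : ℝ → ℝ} {G : ℝ} (hg : IsKernel g G) {A : ℝ → ℝ} {x₀ : ℝ}
    (hA : IsPotter A x₀) (hm : Measurable A) {x y : ℝ} (hx : x₀ ≤ x) (hy : 0 < y) :
    IntegrableOn (fun s => (A s ^ 2)⁻¹ * g (s / y)) (Ioi x) := by
  have hx0 : 0 < x := hA.1.trans_le hx
  have h1 := (integrableOn_Ioi_rpow_of_lt (show (-(3 / 2) : ℝ) < -1 by norm_num) hx0).const_mul
    (G * (A x ^ 2)⁻¹ * y ^ 2 / √x)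
  have := hg.meas
  refine Integrable.mono' h1 (by fun_prop) ?_
  filter_upwards [ae_restrict_mem measurableSet_Ioi] with s hs
  rw [Real.norm_of_nonneg (mul_nonneg (by positivity) (hg.nonneg _))]
  exact hg.pointwise_le hA hx hy (le_of_lt hs)

/-- Crude bound for all `y`; it is of the right order only when `y` is at most a constant times
`x`. -/
lemma IsKernel.integral_le {g : ℝ → ℝ} {G : ℝ} (hg : IsKernel g G) {A : ℝ → ℝ} {x₀ : ℝ}
    (hA : IsPotter A x₀) (hm : Measurable A) {x y : ℝ} (hx : x₀ ≤ x) (hy : 0 < y) :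
    ∫ s in Ioi x, (A s ^ 2)⁻¹ * g (s / y) ≤ 2 * G * ((A x ^ 2)⁻¹ / x) * y ^ 2 := by
  have hx0 : 0 < x := hA.1.trans_le hx
  have h1 := (integrableOn_Ioi_rpow_of_lt (show (-(3 / 2) : ℝ) < -1 by norm_num) hx0).const_mul
    (G * (A x ^ 2)⁻¹ * y ^ 2 / √x)
  refine (setIntegral_mono_on (hg.integrableOn hA hm hx hy) h1 measurableSet_Ioi
    fun s hs => hg.pointwise_le hA hx hy (le_of_lt hs)).trans_eq ?_
  rw [integral_const_mul, integral_Ioi_rpow_of_lt (by norm_num) hx0]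
  have : x ^ (-(3 / 2) + 1 : ℝ) = 1 / √x := by
    rw [Real.sqrt_eq_rpow, one_div, ← Real.rpow_neg hx0.le]; norm_num
  rw [this]
  have hsq : √x * √x = x := Real.mul_self_sqrt hx0.le
  have h3 : 0 < √x := Real.sqrt_pos.2 hx0
  calc _ = 2 * G * (A x ^ 2)⁻¹ * y ^ 2 / (√x * √x) := by norm_num; field_simp
    _ = _ := by rw [hsq]; ring

/-- If `y/x` and `x` are large then `∫_x^∞ g(s/y)/A(s)² ds ≈ (∫₀^∞ g) y/A(y)²`. After the
substitution `s = y t` this is dominated convergence along the filter on pairs `(x, y)` given by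
`x → ∞` and `y/x → ∞`. -/
lemma IsKernel.asymp {g : ℝ → ℝ} {G : ℝ} (hg : IsKernel g G) {A : ℝ → ℝ} {x₀ : ℝ}
    (hA : IsPotter A x₀) (hm : Measurable A) (hS : SlowInc A) {η : ℝ} (hη : 0 < η) :
    ∃ x₁ ≥ x₀, ∃ M ≥ (1 : ℝ), ∀ x ≥ x₁, ∀ y ≥ M * x,
      |(∫ s in Ioi x, (A s ^ 2)⁻¹ * g (s / y)) - (∫ t in Ioi 0, g t) * (y * (A y ^ 2)⁻¹)|
        ≤ η * (y * (A y ^ 2)⁻¹) := by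
  have hgm := hg.meas
  let l : Filter (ℝ × ℝ) := comap (fun p : ℝ × ℝ => (p.1, p.2 / p.1)) (atTop ×ˢ atTop)
  have hl : Tendsto (fun p : ℝ × ℝ => (p.1, p.2 / p.1)) l (atTop ×ˢ atTop) := tendsto_comap
  have hl1 : Tendsto (fun p : ℝ × ℝ => p.1) l atTop :=
    Tendsto.comp (f := fun p : ℝ × ℝ => (p.1, p.2 / p.1)) tendsto_fst hl
  have hl2 : Tendsto (fun p : ℝ × ℝ => p.2 / p.1) l atTop :=
    Tendsto.comp (f := fun p : ℝ × ℝ => (p.1, p.2 / p.1)) tendsto_snd hl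
  -- along `l`, both `p.1 = x` and `p.2 / p.1 = y / x` tend to infinity, hence so does `p.2 = y`
  have hl3 : Tendsto (fun p : ℝ × ℝ => p.2) l atTop := by
    refine (hl1.atTop_mul_atTop₀ hl2).congr' ?_
    filter_upwards [hl1.eventually_gt_atTop 0] with p hp
    field_simp
  let F : ℝ × ℝ → ℝ → ℝ := fun p =>
    (Ioi (p.1 / p.2)).indicator fun t => (A (p.2 * t) ^ 2)⁻¹ / (A p.2 ^ 2)⁻¹ * g t
  have hlim : Tendsto (fun p => ∫ t in Ioi 0, F p t) l (𝓝 (∫ t in Ioi 0, g t)) := by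
    refine tendsto_integral_filter_of_dominated_convergence
      (fun t => (√t + √(1 / t)) * g t) ?_ ?_ hg.integrableOn_bound ?_
    · refine Eventually.of_forall fun p => ?_
      refine (Measurable.indicator ?_ measurableSet_Ioi).aestronglyMeasurable
      fun_prop
    · filter_upwards [hl1.eventually_ge_atTop x₀, hl3.eventually_ge_atTop x₀] with p h1 h3
      filter_upwards [ae_restrict_mem measurableSet_Ioi] with t ht
      have ht0 : 0 < t := ht
      have hb : 0 ≤ (√t + √(1 / t)) * g t := mul_nonneg (by positivity) (hg.nonneg t)
      have hp2 : 0 < p.2 := hA.1.trans_le h3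
      simp only [F, indicator]
      split_ifs with h
      · have hpt : x₀ ≤ p.2 * t := by
          rw [mem_Ioi, div_lt_iff₀ hp2] at h; linarith
        have h4 := hA.inv_sq_le hpt h3
        have e1 : p.2 * t / p.2 = t := by field_simp
        have e2 : p.2 / (p.2 * t) = 1 / t := by field_simp
        rw [e1, e2] at h4
        rw [Real.norm_of_nonneg (mul_nonneg (by positivity) (hg.nonneg t))]
        refine mul_le_mul_of_nonneg_right ?_ (hg.nonneg t)
        have := hA.2.1 _ h3
        rw [div_le_iff₀ (by positivity)]
        linarith
      · simpa using hb
    · filter_upwards [ae_restrict_mem measurableSet_Ioi] with t ht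
      have ht0 : 0 < t := ht
      have h1 := ((hS.tendsto_inv_sq_ratio ht0).comp hl3).mul_const (g t)
      rw [one_mul] at h1
      refine h1.congr' ?_
      filter_upwards [hl2.eventually_gt_atTop (1 / t), hl1.eventually_gt_atTop 0,
        hl3.eventually_gt_atTop 0] with p h2 h3 h4
      have : t ∈ Ioi (p.1 / p.2) := by
        rw [mem_Ioi, div_lt_iff₀ h4]
        rw [div_lt_div_iff₀ ht0 h3] at h2
        linarith
      simp only [F, indicator_of_mem this, Function.comp]
  have hev : ∀ᶠ p in l, |(∫ t in Ioi 0, F p t) - ∫ t in Ioi 0, g t| ≤ η := by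
    filter_upwards [(Metric.tendsto_nhds.1 hlim) η hη] with p hp
    exact le_of_lt hp
  rw [eventually_comap] at hev
  obtain ⟨⟨a, b⟩, hab⟩ := (eventually_atTop.1 (prod_atTop_atTop_eq (α := ℝ) (β := ℝ) ▸ hev))
  refine ⟨max a x₀, le_max_right _ _, max b 1, le_max_right _ _, fun x hx y hy => ?_⟩
  have hxx : x₀ ≤ x := (le_max_right _ _).trans hx
  have hx0 : 0 < x := hA.1.trans_le hxx
  have hyx : x ≤ y := by
    have : 1 * x ≤ max b 1 * x := mul_le_mul_of_nonneg_right (le_max_right _ _) hx0.le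
    linarith
  have hy0 : 0 < y := by linarith
  have hAy := hA.2.1 y (by linarith)
  have h1 := hab (x, y / x) ⟨(le_max_left _ _).trans hx, by
    change b ≤ y / x
    rw [le_div_iff₀ hx0]
    exact (mul_le_mul_of_nonneg_right (le_max_left _ _) hx0.le).trans hy⟩ (x, y) rfl
  have h2 : ∫ t in Ioi 0, F (x, y) t
      = (∫ s in Ioi x, (A s ^ 2)⁻¹ * g (s / y)) / (y * (A y ^ 2)⁻¹) := by
    simp only [F]
    rw [setIntegral_indicator measurableSet_Ioi, Ioi_inter_Ioi, sup_eq_right.2 (by positivity)]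
    have h3 := integral_comp_mul_left_Ioi (fun s => (A s ^ 2)⁻¹ * g (s / y)) (x / y) hy0
    have e : y * (x / y) = x := by field_simp
    rw [e] at h3
    have h4 : ∀ t, (A (y * t) ^ 2)⁻¹ / (A y ^ 2)⁻¹ * g t
        = ((A y ^ 2)⁻¹)⁻¹ * ((A (y * t) ^ 2)⁻¹ * g (y * t / y)) := by
      intro t
      have : y * t / y = t := by field_simp
      rw [this]; ring
    simp_rw [h4]
    rw [integral_const_mul, h3, smul_eq_mul, div_eq_inv_mul, mul_inv]
    ring
  rw [h2] at h1
  have hyB : 0 < y * (A y ^ 2)⁻¹ := by positivity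
  rw [← div_le_iff₀ hyB, ← abs_of_pos hyB, ← abs_div, abs_of_pos hyB, sub_div,
    mul_div_cancel_right₀ _ hyB.ne']
  exact h1

/-! ### The two kernels and their integrals -/

/-- Change of variables `x ↦ 1/x`. -/
lemma lintegral_inv_image (s : Set ℝ) (hs : MeasurableSet s) (h0 : s ⊆ Ioi 0) (f : ℝ → ENNReal) :
    ∫⁻ x in Inv.inv '' s, f x = ∫⁻ x in s, ENNReal.ofReal ((x ^ 2)⁻¹) * f x⁻¹ := by
  rw [lintegral_image_eq_lintegral_abs_deriv_mul hs (f' := fun x => -(x ^ 2)⁻¹)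
    (fun x hx => (hasDerivAt_inv (ne_of_gt (h0 hx))).hasDerivWithinAt) inv_injective.injOn]
  refine setLIntegral_congr_fun hs fun x hx => ?_
  simp only [abs_neg]
  rw [abs_of_nonneg (by positivity)]

lemma laplace_one_sub_cos {r : ℝ} (hr : 0 < r) :
    ∫⁻ v in Ioi (0:ℝ), ENNReal.ofReal (r * Real.exp (-(r * v)) * (1 - Real.cos v))
      = ENNReal.ofReal ((1 + r ^ 2)⁻¹) := by
  have hd : ∀ v : ℝ, HasDerivAt (fun v => -Real.exp (-(r * v)) -
      r * Real.exp (-(r * v)) * (Real.sin v - r * Real.cos v) / (1 + r ^ 2))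
      (r * Real.exp (-(r * v)) * (1 - Real.cos v)) v := by
    intro v
    have h1 : HasDerivAt (fun v : ℝ => Real.exp (-(r * v))) (Real.exp (-(r * v)) * (-(r * 1))) v :=
      ((hasDerivAt_id v).const_mul r).neg.exp
    have h2 := (Real.hasDerivAt_sin v).sub ((Real.hasDerivAt_cos v).const_mul r)
    have h3 := h1.neg.sub (((h1.const_mul r).mul h2).div_const (1 + r ^ 2))
    refine h3.congr_deriv ?_
    have : 1 + r ^ 2 ≠ 0 := by positivity
    simp only [Pi.sub_apply]
    field_simp
    ring
  have hexp : Tendsto (fun v : ℝ => Real.exp (-(r * v))) atTop (𝓝 0) :=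
    Real.tendsto_exp_neg_atTop_nhds_zero.comp (tendsto_id.const_mul_atTop hr)
  have hb : Tendsto (fun v : ℝ => Real.exp (-(r * v)) * (Real.sin v - r * Real.cos v)) atTop
      (𝓝 0) := by
    refine squeeze_zero_norm (a := fun v => Real.exp (-(r * v)) * (1 + r)) (fun v => ?_) ?_
    · rw [norm_mul, Real.norm_of_nonneg (Real.exp_pos _).le]
      refine mul_le_mul_of_nonneg_left ?_ (Real.exp_pos _).le
      have h1 := Real.neg_one_le_sin v
      have h2 := Real.sin_le_one v
      have h3 := Real.neg_one_le_cos v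
      have h4 := Real.cos_le_one v
      rw [Real.norm_eq_abs, abs_le]; constructor <;> nlinarith
    · simpa using hexp.mul_const (1 + r)
  have ht : Tendsto (fun v => -Real.exp (-(r * v)) -
      r * Real.exp (-(r * v)) * (Real.sin v - r * Real.cos v) / (1 + r ^ 2)) atTop (𝓝 0) := by
    have := hexp.neg.sub ((hb.const_mul r).div_const (1 + r ^ 2))
    simp only [mul_zero, zero_div, neg_zero, sub_zero] at this
    refine this.congr fun v => ?_
    ring
  have hpos : ∀ v ∈ Ioi (0:ℝ), 0 ≤ r * Real.exp (-(r * v)) * (1 - Real.cos v) := fun v _ =>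
    mul_nonneg (by positivity) (by linarith [Real.cos_le_one v])
  have hi := integrableOn_Ioi_deriv_of_nonneg' (fun v _ => hd v) hpos ht
  rw [← ofReal_integral_eq_lintegral_ofReal hi
    (by filter_upwards [ae_restrict_mem measurableSet_Ioi] with v hv using hpos v hv),
    integral_Ioi_of_hasDerivAt_of_nonneg' (fun v _ => hd v) hpos ht]
  congr 1
  simp
  field_simp
  ring

lemma lintegral_mul_exp {v : ℝ} (hv : 0 < v) :
    ∫⁻ r in Ioi (0:ℝ), ENNReal.ofReal (r * Real.exp (-(r * v)))
      = ENNReal.ofReal ((v ^ 2)⁻¹) := by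
  have h := Real.integral_rpow_mul_exp_neg_mul_Ioi (show (0:ℝ) < 2 by norm_num) hv
  have e : ∀ r : ℝ, r ^ ((2:ℝ) - 1) * Real.exp (-(v * r)) = r * Real.exp (-(r * v)) := by
    intro r; rw [show (2:ℝ) - 1 = 1 by norm_num, Real.rpow_one, mul_comm v r]
  simp_rw [e] at h
  have h2 : (1 / v) ^ (2:ℝ) * Real.Gamma 2 = (v ^ 2)⁻¹ := by
    rw [Real.Gamma_two, mul_one, Real.rpow_two]; simp
  rw [h2] at h
  rw [← h]
  refine (ofReal_integral_eq_lintegral_ofReal ?_ ?_).symm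
  · by_contra hc
    rw [integral_undef hc] at h
    have : 0 < (v ^ 2)⁻¹ := by positivity
    linarith
  · filter_upwards [ae_restrict_mem measurableSet_Ioi] with r hr
    have : (0:ℝ) < r := hr
    positivity

/-- With `v = 1/t` this is `∫₀^∞ (1 - cos v)/v² dv = π/2`: write `1/v² = ∫₀^∞ r e^{-rv} dr` and
exchange the integrals, which leaves `∫₀^∞ dr/(1 + r²)`. -/
lemma lintegral_one_sub_cos :
    ∫⁻ t in Ioi (0:ℝ), ENNReal.ofReal (1 - Real.cos t⁻¹) = ENNReal.ofReal (Real.pi / 2) := by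
  have himg : Inv.inv '' (Ioi (0:ℝ)) = Ioi 0 := by
    rw [image_inv_eq_inv]; ext x; simp
  rw [← himg, lintegral_inv_image _ measurableSet_Ioi subset_rfl]
  simp only [inv_inv]
  have h1 : ∀ v ∈ Ioi (0:ℝ), ENNReal.ofReal ((v ^ 2)⁻¹) * ENNReal.ofReal (1 - Real.cos v)
      = ∫⁻ r in Ioi (0:ℝ), ENNReal.ofReal (r * Real.exp (-(r * v)) * (1 - Real.cos v)) := by
    intro v hv
    rw [← lintegral_mul_exp hv, ← lintegral_mul_const _ (by fun_prop)]
    refine setLIntegral_congr_fun measurableSet_Ioi fun r hr => ?_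
    have : (0:ℝ) < r := hr
    rw [← ENNReal.ofReal_mul (by positivity)]
  rw [setLIntegral_congr_fun measurableSet_Ioi h1, lintegral_lintegral_swap (by
    refine Measurable.aemeasurable ?_
    unfold Function.uncurry
    fun_prop)]
  rw [setLIntegral_congr_fun measurableSet_Ioi (fun r hr => laplace_one_sub_cos hr)]
  rw [← ofReal_integral_eq_lintegral_ofReal integrable_inv_one_add_sq.integrableOn
    (Eventually.of_forall fun r => by positivity), integral_Ioi_inv_one_add_sq]
  simp

/-- The kernel producing `E[1 - cos(X/s)]` when evaluated at `t = s/|X|`. Its value at `0` is `0`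
(as `0⁻¹ = 0`), which is the right one for `X = 0`, where `s/|X| = 0` as well. -/
noncomputable def kcos (t : ℝ) : ℝ := 1 - Real.cos t⁻¹

/-- The kernel producing `P[|X| > s]` when evaluated at `t = s/|X|`, for `s > 0`. -/
noncomputable def kind (t : ℝ) : ℝ := (Ioo (0:ℝ) 1).indicator 1 t

lemma kcos_kernel : IsKernel kcos 2 where
  meas := by unfold kcos; fun_prop
  pos := by norm_num
  nonneg t := by unfold kcos; linarith [Real.cos_le_one t⁻¹]
  le t _ := by unfold kcos; linarith [Real.neg_one_le_cos t⁻¹]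
  le_sq t ht := by
    unfold kcos
    have h1 := Real.one_sub_sq_div_two_le_cos (x := t⁻¹)
    have h2 : (2:ℝ) / t ^ 2 = 2 * (t⁻¹) ^ 2 := by rw [inv_pow]; ring
    rw [h2]
    nlinarith [sq_nonneg t⁻¹]

lemma kind_kernel : IsKernel kind 2 where
  meas := by unfold kind; exact measurable_one.indicator measurableSet_Ioo
  pos := by norm_num
  nonneg t := by unfold kind; exact indicator_nonneg (by simp) t
  le t _ := by unfold kind indicator; split_ifs <;> norm_num
  le_sq t ht := by
    unfold kind indicator
    split_ifs with h
    · rw [le_div_iff₀ (by positivity)]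
      have : t < 1 := h.2
      simp; nlinarith
    · positivity

lemma integral_kcos : ∫ t in Ioi 0, kcos t = Real.pi / 2 := by
  rw [integral_eq_lintegral_of_nonneg_ae (Eventually.of_forall kcos_kernel.nonneg)
    kcos_kernel.meas.aestronglyMeasurable]
  unfold kcos
  rw [lintegral_one_sub_cos, ENNReal.toReal_ofReal (by positivity)]

lemma integral_kind : ∫ t in Ioi 0, kind t = 1 := by
  unfold kind
  rw [setIntegral_indicator measurableSet_Ioo, inter_eq_self_of_subset_right Ioo_subset_Ioi_self]
  simp

/-! ### Comparison of the two averaged integrals -/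

/-- The contribution of `|X| = y` to the integral of a kernel against the weight `1/A²`. -/
noncomputable def kerInt (A g : ℝ → ℝ) (x y : ℝ) : ℝ :=
  ∫ s in Ioi x, (A s ^ 2)⁻¹ * g (s / y)

lemma kerInt_nonneg {A g : ℝ → ℝ} (hg : ∀ t, 0 ≤ g t) (x y : ℝ) : 0 ≤ kerInt A g x y :=
  integral_nonneg fun _ => mul_nonneg (by positivity) (hg _)

/-- Comparison of the two kernels at a fixed `y`. For `y` large compared with `x` both sides follow
their asymptotics; otherwise both are absorbed in the error term. -/
lemma kerInt_compare {A : ℝ → ℝ} (hm : Measurable A) (hS : SlowInc A) {η : ℝ} (hη : 0 < η) :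
    ∃ x₁, IsPotter A x₁ ∧ ∃ C ≥ (0:ℝ), ∀ x ≥ x₁, ∀ y > 0,
      kerInt A kcos x y ≤ (Real.pi / 2 + η) * kerInt A kind x y
        + C * ((A x ^ 2)⁻¹ / x) * min y x ^ 2 ∧
      (Real.pi / 2 - η) * kerInt A kind x y ≤ kerInt A kcos x y
        + C * ((A x ^ 2)⁻¹ / x) * min y x ^ 2 := by
  obtain ⟨x₀, hP⟩ := hS.exists_potter
  obtain ⟨δ, hδ⟩ : ∃ δ, δ = min (1 / 2) (η / 6) := ⟨_, rfl⟩
  have hδ0 : 0 < δ := by rw [hδ]; positivity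
  have hδ1 : δ ≤ 1 / 2 := by rw [hδ]; exact min_le_left _ _
  have hδ2 : δ ≤ η / 6 := by rw [hδ]; exact min_le_right _ _
  obtain ⟨a, ha, M, hM, h1⟩ := kcos_kernel.asymp hP hm hS hδ0
  obtain ⟨b, hb, N, hN, h2⟩ := kind_kernel.asymp hP hm hS hδ0
  rw [integral_kcos] at h1
  rw [integral_kind] at h2
  have hpi := Real.pi_le_four
  have hpi0 := Real.pi_pos
  refine ⟨max a b, hP.mono (ha.trans (le_max_left _ _)), 8 * (max M N) ^ 2, by positivity,
    fun x hx y hy => ?_⟩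
  have hxa : a ≤ x := (le_max_left _ _).trans hx
  have hxb : b ≤ x := (le_max_right _ _).trans hx
  have hx0' : x₀ ≤ x := le_trans ha hxa
  have hx0 : 0 < x := hP.1.trans_le hx0'
  have hpc := kerInt_nonneg (A := A) kcos_kernel.nonneg x y
  have hpi' := kerInt_nonneg (A := A) kind_kernel.nonneg x y
  have hBx : 0 ≤ (A x ^ 2)⁻¹ / x := by positivity
  rcases le_total (max M N * x) y with h | h
  · have h1 := abs_le.1 (h1 x hxa y
      ((mul_le_mul_of_nonneg_right (le_max_left _ _) hx0.le).trans h))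
    have h2 := abs_le.1 (h2 x hxb y
      ((mul_le_mul_of_nonneg_right (le_max_right _ _) hx0.le).trans h))
    change -_ ≤ kerInt A kcos x y - _ ∧ kerInt A kcos x y - _ ≤ _ at h1
    change -_ ≤ kerInt A kind x y - _ ∧ kerInt A kind x y - _ ≤ _ at h2
    have hw : 0 ≤ y * (A y ^ 2)⁻¹ := by positivity
    have he : 0 ≤ 8 * max M N ^ 2 * ((A x ^ 2)⁻¹ / x) * min y x ^ 2 := by positivity
    revert h1 h2 hw he hpc hpi'
    generalize kerInt A kcos x y = P
    generalize kerInt A kind x y = Q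
    generalize y * (A y ^ 2)⁻¹ = w
    generalize 8 * max M N ^ 2 * ((A x ^ 2)⁻¹ / x) * min y x ^ 2 = e
    intro hP0 hQ0 h1 h2 hw he
    have k1 : w ≤ 2 * Q := by nlinarith
    have k2 : δ * w ≤ 2 * δ * Q := by nlinarith
    have k3 : 6 * δ * Q ≤ η * Q := mul_le_mul_of_nonneg_right (by linarith) hQ0
    have k4 : Real.pi / 2 * (Q - w) ≤ 2 * (δ * w) := by nlinarith [mul_nonneg hδ0.le hw]
    have k5 : Real.pi / 2 * (w - Q) ≤ 2 * (δ * w) := by nlinarith [mul_nonneg hδ0.le hw]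
    constructor <;> nlinarith
  -- here `y` is at most a constant times `min y x`, so the crude bound is of the size of the error
  · have h1 := kcos_kernel.integral_le hP hm hx0' hy
    have h2 := kind_kernel.integral_le hP hm hx0' hy
    change kerInt A kcos x y ≤ _ at h1
    change kerInt A kind x y ≤ _ at h2
    have hK : (1:ℝ) ≤ max M N := hM.trans (le_max_left _ _)
    have h3 : y ≤ max M N * min y x := by
      rcases le_total y x with h' | h'
      · rw [min_eq_left h']; nlinarith
      · rwa [min_eq_right h']
    have h4 : y ^ 2 ≤ max M N ^ 2 * min y x ^ 2 := by
      rw [← mul_pow]; exact pow_le_pow_left₀ hy.le h3 2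
    have h5 := mul_le_mul_of_nonneg_left h4 hBx
    have h6 : 0 ≤ (A x ^ 2)⁻¹ / x * (max M N ^ 2 * min y x ^ 2) := by positivity
    constructor
    · have : 0 ≤ (Real.pi / 2 + η) * kerInt A kind x y := by positivity
      nlinarith
    · have : (Real.pi / 2 - η) * kerInt A kind x y ≤ 2 * kerInt A kind x y :=
        mul_le_mul_of_nonneg_right (by linarith) hpi'
      nlinarith

/-- Tonelli: averaging `kerInt` over `|X|`. -/
lemma lintegral_kerInt (μ : Measure ℝ) [IsProbabilityMeasure μ] {g : ℝ → ℝ} {G : ℝ}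
    (hg : IsKernel g G) (hg0 : g 0 = 0) {A : ℝ → ℝ} {x₀ : ℝ} (hA : IsPotter A x₀)
    (hm : Measurable A) {x : ℝ} (hx : x₀ ≤ x) :
    ∫⁻ ω, ENNReal.ofReal (kerInt A g x |ω|) ∂μ
      = ∫⁻ s in Ioi x, ENNReal.ofReal ((A s ^ 2)⁻¹ * ∫ ω, g (s / |ω|) ∂μ) := by
  have hgm := hg.meas
  have h1 : ∀ ω : ℝ, ENNReal.ofReal (kerInt A g x |ω|)
      = ∫⁻ s in Ioi x, ENNReal.ofReal ((A s ^ 2)⁻¹ * g (s / |ω|)) := by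
    intro ω
    rw [kerInt, ofReal_integral_eq_lintegral_ofReal]
    · by_cases h : ω = 0
      · simp [h, hg0]
      · exact hg.integrableOn hA hm hx (abs_pos.2 h)
    · exact Eventually.of_forall fun s => mul_nonneg (by positivity) (hg.nonneg _)
  simp_rw [h1]
  rw [lintegral_lintegral_swap]
  · refine setLIntegral_congr_fun measurableSet_Ioi fun s hs => ?_
    have hint : Integrable (fun ω : ℝ => g (s / |ω|)) μ := by
      refine Integrable.of_bound (C := G)
        (hgm.comp (by fun_prop : Measurable fun ω : ℝ => s / |ω|)).aestronglyMeasurable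
        (Eventually.of_forall fun ω => ?_)
      rw [Real.norm_of_nonneg (hg.nonneg _)]
      have hs0 : 0 < s := (hA.1.trans_le hx).trans hs
      by_cases h : ω = 0
      · simp [h, hg0, hg.pos.le]
      · exact hg.le _ (div_pos hs0 (abs_pos.2 h))
    change _ = ENNReal.ofReal _
    rw [← integral_const_mul, ofReal_integral_eq_lintegral_ofReal (hint.const_mul _)]
    exact Eventually.of_forall fun ω => mul_nonneg (by positivity) (hg.nonneg _)
  · refine Measurable.aemeasurable ?_
    unfold Function.uncurry
    fun_prop

lemma integrable_min_sq (μ : Measure ℝ) [IsProbabilityMeasure μ] {x : ℝ} (hx : 0 ≤ x) :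
    Integrable (fun ω => min |ω| x ^ 2) μ := by
  refine Integrable.of_bound (C := x ^ 2) (by fun_prop) (Eventually.of_forall fun ω => ?_)
  rw [Real.norm_of_nonneg (by positivity)]
  exact pow_le_pow_left₀ (le_min (abs_nonneg _) hx) (min_le_right _ _) 2

/-- The truncated second moment `V(x) = E[min(|X|, x)²]`. -/
noncomputable def truncVar (μ : Measure ℝ) (x : ℝ) : ℝ := ∫ ω, min |ω| x ^ 2 ∂μ

/-- `kerInt_compare` averaged over `|X|`. -/
lemma lintegral_compare (μ : Measure ℝ) [IsProbabilityMeasure μ] {A : ℝ → ℝ}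
    (hm : Measurable A) (hS : SlowInc A) {η : ℝ} (hη : 0 < η) (hη1 : η < 1) :
    ∃ x₁, IsPotter A x₁ ∧ ∃ C ≥ (0:ℝ), ∀ x ≥ x₁,
      (∫⁻ s in Ioi x, ENNReal.ofReal ((A s ^ 2)⁻¹ * ∫ ω, kcos (s / |ω|) ∂μ)
        ≤ ENNReal.ofReal (Real.pi / 2 + η) *
          (∫⁻ s in Ioi x, ENNReal.ofReal ((A s ^ 2)⁻¹ * ∫ ω, kind (s / |ω|) ∂μ))
          + ENNReal.ofReal (C * ((A x ^ 2)⁻¹ / x) * truncVar μ x)) ∧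
      (ENNReal.ofReal (Real.pi / 2 - η) *
          (∫⁻ s in Ioi x, ENNReal.ofReal ((A s ^ 2)⁻¹ * ∫ ω, kind (s / |ω|) ∂μ))
        ≤ (∫⁻ s in Ioi x, ENNReal.ofReal ((A s ^ 2)⁻¹ * ∫ ω, kcos (s / |ω|) ∂μ))
          + ENNReal.ofReal (C * ((A x ^ 2)⁻¹ / x) * truncVar μ x)) := by
  obtain ⟨x₁, hP, C, hC, h⟩ := kerInt_compare hm hS hη
  refine ⟨x₁, hP, C, hC, fun x hx => ?_⟩
  have hx0 : 0 < x := hP.1.trans_le hx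
  have hc0 : kcos 0 = 0 := by simp [kcos]
  have hi0 : kind 0 = 0 := by simp [kind]
  have hpi := Real.pi_gt_three
  rw [← lintegral_kerInt μ kcos_kernel hc0 hP hm hx, ← lintegral_kerInt μ kind_kernel hi0 hP hm hx]
  have hE : ENNReal.ofReal (C * ((A x ^ 2)⁻¹ / x) * truncVar μ x)
      = ∫⁻ ω, ENNReal.ofReal (C * ((A x ^ 2)⁻¹ / x) * min |ω| x ^ 2) ∂μ := by
    rw [truncVar, ← integral_const_mul,
      ofReal_integral_eq_lintegral_ofReal ((integrable_min_sq μ hx0.le).const_mul _)]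
    exact Eventually.of_forall fun ω => by positivity
  have hkz : ∀ g : ℝ → ℝ, g 0 = 0 → kerInt A g x 0 = 0 := fun g hg => by simp [kerInt, hg]
  have hpt : ∀ ω : ℝ, kerInt A kcos x |ω| ≤ (Real.pi / 2 + η) * kerInt A kind x |ω|
        + C * ((A x ^ 2)⁻¹ / x) * min |ω| x ^ 2 ∧
      (Real.pi / 2 - η) * kerInt A kind x |ω| ≤ kerInt A kcos x |ω|
        + C * ((A x ^ 2)⁻¹ / x) * min |ω| x ^ 2 := by
    intro ω
    by_cases h0 : ω = 0
    · simp [h0, hkz _ hc0, hkz _ hi0, hx0.le]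
    · exact h x hx _ (abs_pos.2 h0)
  have hmE : Measurable fun ω : ℝ => ENNReal.ofReal (C * ((A x ^ 2)⁻¹ / x) * min |ω| x ^ 2) := by
    fun_prop
  rw [hE]
  constructor
  · rw [← lintegral_const_mul' _ _ ENNReal.ofReal_ne_top, ← lintegral_add_right _ hmE]
    refine lintegral_mono fun ω => ?_
    rw [← ENNReal.ofReal_mul (by positivity), ← ENNReal.ofReal_add
      (mul_nonneg (by positivity) (kerInt_nonneg kind_kernel.nonneg _ _)) (by positivity)]
    exact ENNReal.ofReal_le_ofReal (hpt ω).1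
  · rw [← lintegral_const_mul' _ _ ENNReal.ofReal_ne_top, ← lintegral_add_right _ hmE]
    refine lintegral_mono fun ω => ?_
    rw [← ENNReal.ofReal_mul (by linarith), ← ENNReal.ofReal_add
      (kerInt_nonneg kcos_kernel.nonneg _ _) (by positivity)]
    exact ENNReal.ofReal_le_ofReal (hpt ω).2

/-! ### Tails, truncated variance and condition (Ha) -/

section tails
variable (μ : Measure ℝ) [IsProbabilityMeasure μ]

lemma Hf_nonneg (x : ℝ) : 0 ≤ Hf μ x := ENNReal.toReal_nonneg

lemma Hf_antitone : Antitone (Hf μ) := fun _ b hab =>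
  ENNReal.toReal_mono (measure_ne_top _ _) (measure_mono fun y (hy : b < |y|) => hab.trans_lt hy)

lemma Hf_le_one (x : ℝ) : Hf μ x ≤ 1 := by
  have := measureReal_le_one (μ := μ) (s := {y : ℝ | x < |y|})
  exact this

lemma abs_Kf_le {t : ℝ} (ht : 0 ≤ t) : |Kf μ t| ≤ Hf μ t := by
  have h : {y : ℝ | t < |y|} = Ioi t ∪ Iio (-t) := by
    ext y; simp [lt_abs, lt_neg]
  have hd : Disjoint (Ioi t) (Iio (-t)) := by
    rw [Set.disjoint_left]; intro a ha hb
    simp only [mem_Ioi, mem_Iio] at ha hb; linarith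
  have h1 : Hf μ t = (μ (Ioi t)).toReal + (μ (Iio (-t))).toReal := by
    rw [Hf, h, measure_union hd measurableSet_Iio,
      ENNReal.toReal_add (measure_ne_top _ _) (measure_ne_top _ _)]
  have h2 : 0 ≤ (μ (Ioi t)).toReal := ENNReal.toReal_nonneg
  have h3 : 0 ≤ (μ (Iio (-t))).toReal := ENNReal.toReal_nonneg
  rw [h1, Kf, abs_le]; constructor <;> linarith

lemma antitone_pos : Antitone fun t : ℝ => (μ (Ioi t)).toReal := fun _ _ hab =>
  ENNReal.toReal_mono (measure_ne_top _ _) (measure_mono (Ioi_subset_Ioi hab))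

lemma antitone_neg : Antitone fun t : ℝ => (μ (Iio (-t))).toReal := fun _ _ hab =>
  ENNReal.toReal_mono (measure_ne_top _ _) (measure_mono (Iio_subset_Iio (neg_le_neg hab)))

lemma Kf_intervalIntegrable (a b : ℝ) : IntervalIntegrable (Kf μ) volume a b :=
  (antitone_pos μ).intervalIntegrable.sub (antitone_neg μ).intervalIntegrable

lemma Af_continuous : Continuous (Af μ) :=
  intervalIntegral.continuous_primitive (Kf_intervalIntegrable μ) 0

lemma Af_sub (x y : ℝ) : Af μ y - Af μ x = ∫ t in x..y, Kf μ t := by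
  rw [Af, Af, intervalIntegral.integral_interval_sub_left] <;> exact Kf_intervalIntegrable μ _ _

lemma abs_Af_sub_le {x y : ℝ} (hx : 0 ≤ x) (hxy : x ≤ y) :
    |Af μ y - Af μ x| ≤ (y - x) * Hf μ x := by
  rw [Af_sub]
  have := intervalIntegral.norm_integral_le_of_norm_le_const (a := x) (b := y) (C := Hf μ x)
    (f := Kf μ) (fun t ht => by
      rw [uIoc_of_le hxy] at ht
      exact (abs_Kf_le μ (hx.trans ht.1.le)).trans (Hf_antitone μ ht.1.le))
  rw [abs_of_nonneg (by linarith : 0 ≤ y - x), mul_comm] at this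
  exact this

variable {μ}

/-- Condition (Ha) with the division cleared. The division convention `a/0 = 0` makes (Ha) force
`x H(x) ≠ 0` for large `x`. -/
lemma HaCond.tail_le (h : HaCond μ) {ε : ℝ} (hε : 0 < ε) :
    ∃ x₀ : ℝ, 0 < x₀ ∧ ∀ x ≥ x₀, 0 < Af μ x ∧ x * Hf μ x ≤ ε * Af μ x := by
  obtain ⟨a, ha⟩ := eventually_atTop.1 (tendsto_atTop.1 h (1 / ε))
  refine ⟨max a 1, by positivity, fun x hx => ?_⟩
  have hx0 : 0 < x := lt_of_lt_of_le (by positivity) hx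
  have h1 := ha x ((le_max_left _ _).trans hx)
  have h2 : 0 < Af μ x / (x * Hf μ x) := lt_of_lt_of_le (by positivity) h1
  have h3 : 0 < x * Hf μ x := by
    rcases (mul_nonneg hx0.le (Hf_nonneg μ x)).eq_or_lt with h0 | h0
    · rw [← h0, div_zero] at h2; exact absurd h2 (lt_irrefl _)
    · exact h0
  have h4 : 0 < Af μ x := by
    by_contra hc
    exact absurd h2 (not_lt.2 (div_nonpos_of_nonpos_of_nonneg (not_lt.1 hc) h3.le))
  refine ⟨h4, ?_⟩
  rw [div_le_div_iff₀ hε h3] at h1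
  linarith

/-- Over `[x, y]` the function `A` moves by at most `(y - x) H(x)`, and `x H(x) = o(A(x))`. -/
lemma HaCond.slowInc (h : HaCond μ) : SlowInc (Af μ) := by
  intro ε hε
  obtain ⟨x₀, hx₀, hx⟩ := h.tail_le hε
  refine ⟨x₀, hx₀, fun x hxx => ⟨(hx x hxx).1, fun y hy => ?_⟩⟩
  have hx0 : 0 < x := lt_of_lt_of_le hx₀ hxx
  refine (abs_Af_sub_le μ hx0.le hy).trans ?_
  rw [mul_div_assoc', le_div_iff₀ hx0]
  nlinarith [mul_le_mul_of_nonneg_left (hx x hxx).2 (sub_nonneg.2 hy)]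

lemma truncVar_nonneg (x : ℝ) : 0 ≤ truncVar μ x := integral_nonneg fun _ => by positivity

lemma truncVar_le {x : ℝ} (hx : 0 ≤ x) : truncVar μ x ≤ x ^ 2 := by
  have := integral_mono (integrable_min_sq μ hx) (integrable_const (x ^ 2)) (fun ω =>
    pow_le_pow_left₀ (le_min (abs_nonneg ω) hx) (min_le_right _ _) 2)
  rw [truncVar]
  refine this.trans_eq ?_
  simp

lemma Hf_eq_integral (x : ℝ) :
    Hf μ x = ∫ ω, {y : ℝ | x < |y|}.indicator 1 ω ∂μ := by
  have hms : MeasurableSet {y : ℝ | x < |y|} := measurableSet_lt measurable_const measurable_id.abs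
  rw [integral_indicator_one hms]; rfl

/-- Passing from `s` to `2s` changes the truncated square only where `|X| > s`. -/
lemma truncVar_two_mul_le {s : ℝ} (hs : 0 ≤ s) :
    truncVar μ (2 * s) ≤ truncVar μ s + 4 * s ^ 2 * Hf μ s := by
  have hms : MeasurableSet {y : ℝ | s < |y|} := measurableSet_lt measurable_const measurable_id.abs
  have hi : Integrable (fun ω : ℝ => 4 * s ^ 2 * {y : ℝ | s < |y|}.indicator (1 : ℝ → ℝ) ω) μ :=
    ((integrable_const (1:ℝ)).indicator hms).const_mul _
  rw [Hf_eq_integral, ← integral_const_mul, truncVar, truncVar,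
    ← integral_add (integrable_min_sq μ hs) hi]
  refine integral_mono (integrable_min_sq μ (by linarith))
    ((integrable_min_sq μ hs).add hi) fun ω => ?_
  simp only [indicator, mem_ofPred_eq, Pi.one_apply]
  split_ifs with h
  · have : min |ω| (2 * s) ^ 2 ≤ (2 * s) ^ 2 :=
      pow_le_pow_left₀ (le_min (abs_nonneg ω) (by linarith)) (min_le_right _ _) 2
    nlinarith [sq_nonneg (min |ω| s)]
  · push Not at h
    rw [min_eq_left h, min_eq_left (by linarith)]; simp

/-- Dyadic induction: `V(2u) ≤ V(u) + 4u² H(u)` with `u H(u) ≤ ε A(u)`, while `u A(u)` grows by a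
factor close to `2`. -/
lemma HaCond.truncVar_bound (h : HaCond μ) {ε : ℝ} (hε : 0 < ε) :
    ∃ x₀ K : ℝ, 0 < x₀ ∧ 0 ≤ K ∧ ∀ s ≥ x₀, truncVar μ s ≤ K + 7 * ε * (s * Af μ s) := by
  obtain ⟨a, ha, h1⟩ := h.tail_le hε
  obtain ⟨b, hb, h2⟩ := h.slowInc (1 / 16) (by norm_num)
  obtain ⟨x₀, hx₀⟩ : ∃ x₀, x₀ = max a b := ⟨_, rfl⟩
  have hxa : a ≤ x₀ := hx₀ ▸ le_max_left _ _
  have hxb : b ≤ x₀ := hx₀ ▸ le_max_right _ _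
  have hx0 : 0 < x₀ := by linarith
  -- `4 x₀²` bounds `V` on the first dyadic block `[x₀, 2 x₀]`
  refine ⟨x₀, 4 * x₀ ^ 2, hx0, by positivity, ?_⟩
  have key : ∀ n : ℕ, ∀ s, x₀ ≤ s → s ≤ 2 ^ (n + 1) * x₀ →
      truncVar μ s ≤ 4 * x₀ ^ 2 + 7 * ε * (s * Af μ s) := by
    intro n
    induction n with
    | zero =>
      intro s hs hs2
      have hA := (h1 s (by linarith)).1
      have := truncVar_le (μ := μ) (hx0.le.trans hs)
      have h3 : 0 ≤ 7 * ε * (s * Af μ s) := by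
        have : 0 < s := by linarith
        positivity
      simp at hs2
      nlinarith
    | succ n ih =>
      intro s hs hs2
      by_cases hsn : s ≤ 2 ^ (n + 1) * x₀
      · exact ih s hs hsn
      · push Not at hsn
        obtain ⟨u, hu⟩ : ∃ u, u = s / 2 := ⟨_, rfl⟩
        have hsu : s = 2 * u := by rw [hu]; ring
        have hux : x₀ ≤ u := by
          have : (1:ℝ) ≤ 2 ^ n := one_le_pow₀ one_le_two
          rw [pow_succ] at hsn
          nlinarith
        have hu2 : u ≤ 2 ^ (n + 1) * x₀ := by
          rw [pow_succ] at hs2; linarith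
        have hi := ih u hux hu2
        have hu0 : 0 < u := by linarith
        obtain ⟨hAu, hd⟩ := h2 u (by linarith)
        have hd := (abs_le.1 (hd (2 * u) (by linarith))).1
        have e : (2 * u - u) / u = 1 := by field_simp; ring
        rw [e] at hd
        have hH := (h1 u (by linarith)).2
        have ht := truncVar_two_mul_le (μ := μ) hu0.le
        rw [hsu]
        have k1 : 4 * u ^ 2 * Hf μ u ≤ 4 * ε * (u * Af μ u) := by nlinarith
        have k2 : 0 < ε * u := by positivity
        have k3 : Af μ u * (15 / 16) ≤ Af μ (2 * u) := by linarith
        have k4 : 11 * (ε * u) * Af μ u ≤ 14 * (ε * u) * Af μ (2 * u) := by nlinarith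
        nlinarith
  intro s hs
  obtain ⟨n, hn⟩ := pow_unbounded_of_one_lt (s / x₀) (one_lt_two (α := ℝ))
  rw [div_lt_iff₀ hx0] at hn
  refine key n s hs (hn.le.trans ?_)
  rw [pow_succ]
  have : (0:ℝ) < 2 ^ n * x₀ := by positivity
  linarith

lemma HaCond.tendsto_truncVar (h : HaCond μ) :
    Tendsto (fun s => truncVar μ s / (s * Af μ s)) atTop (𝓝 0) := by
  obtain ⟨x₁, hP⟩ := h.slowInc.exists_potter
  rw [Metric.tendsto_nhds]
  intro ε hε
  obtain ⟨x₀, K, hx₀, hK, hb⟩ := h.truncVar_bound (ε := ε / 14) (by positivity)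
  filter_upwards [eventually_ge_atTop x₀, eventually_ge_atTop x₁,
    hP.tendsto_mul_atTop.eventually_gt_atTop (2 * K / ε)] with s h1 h2 h3
  have hpos : 0 < s * Af μ s := mul_pos (by linarith) (hP.2.1 s h2)
  rw [Real.dist_eq, sub_zero, abs_of_nonneg (div_nonneg (truncVar_nonneg s) hpos.le),
    div_lt_iff₀ hpos]
  rw [div_lt_iff₀ hε] at h3
  have := hb s h1
  nlinarith

end tails

/-! ### The real part of `1/(1-φ)` -/

section charfun
variable (μ : Measure ℝ) [IsProbabilityMeasure μ]

/-- Layer-cake formula for a truncated positive part. -/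
lemma integral_tail_eq {f : ℝ → ℝ} (hf : Measurable f) {s : ℝ} (hs : 0 ≤ s) :
    ∫ t in (0:ℝ)..s, (μ {ω | t < f ω}).toReal = ∫ ω, min (max (f ω) 0) s ∂μ := by
  have hi : Integrable (fun ω => min (max (f ω) 0) s) μ := by
    refine Integrable.of_bound (C := s) (by fun_prop) (Eventually.of_forall fun ω => ?_)
    rw [Real.norm_of_nonneg (le_min (le_max_right _ _) hs)]
    exact min_le_right _ _
  rw [hi.integral_eq_integral_meas_lt
    (Eventually.of_forall fun ω => le_min (le_max_right _ _) hs),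
    intervalIntegral.integral_of_le hs, integral_Ioc_eq_integral_Ioo]
  have : ∀ t ∈ Ioi (0:ℝ), μ.real {ω | t < min (max (f ω) 0) s}
      = (Iio s).indicator (fun t => (μ {ω | t < f ω}).toReal) t := by
    intro t ht
    have ht0 : 0 < t := ht
    by_cases h : t < s
    · rw [indicator_of_mem (show t ∈ Iio s from h), measureReal_def]
      congr 2
      ext ω
      simp [h, ht0.not_gt]
    · rw [indicator_of_notMem (show t ∉ Iio s from h)]
      simp [h]
  rw [setIntegral_congr_fun measurableSet_Ioi this, setIntegral_indicator measurableSet_Iio,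
    Ioi_inter_Iio]

/-- `A(s)` is the mean of `X` clamped to `[-s, s]`. -/
lemma Af_eq {s : ℝ} (hs : 0 ≤ s) :
    Af μ s = ∫ ω, (min (max ω 0) s - min (max (-ω) 0) s) ∂μ := by
  have h1 := integral_tail_eq μ measurable_id hs
  have h2 := integral_tail_eq μ measurable_neg hs
  have hi : ∀ f : ℝ → ℝ, Measurable f → Integrable (fun ω => min (max (f ω) 0) s) μ := by
    intro f hf
    refine Integrable.of_bound (C := s) (by fun_prop) (Eventually.of_forall fun ω => ?_)
    rw [Real.norm_of_nonneg (le_min (le_max_right _ _) hs)]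
    exact min_le_right _ _
  have hi1 : Integrable (fun ω : ℝ => min (max ω 0) s) μ := hi _ measurable_id
  have hi2 : Integrable (fun ω : ℝ => min (max (-ω) 0) s) μ := hi _ measurable_neg
  rw [integral_sub hi1 hi2]
  rw [Af]
  unfold Kf
  rw [intervalIntegral.integral_sub (antitone_pos μ).intervalIntegrable
    (antitone_neg μ).intervalIntegrable]
  simp only [id] at h1
  rw [← h1, ← h2]
  have e : ∀ t : ℝ, {ω : ℝ | t < -ω} = Iio (-t) := by intro t; ext ω; simp [lt_neg]
  simp_rw [e]
  rfl

lemma sin_clamp_le_of_nonneg {ω s : ℝ} (hs : 0 < s) (hω : 0 ≤ ω) :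
    |Real.sin (ω / s) - min ω s / s| ≤ 2 / s ^ 2 * min ω s ^ 2 := by
  rcases le_total ω s with h | h
  · rw [min_eq_left h]
    obtain ⟨v, hv⟩ : ∃ v, v = ω / s := ⟨_, rfl⟩
    have hv0 : 0 ≤ v := by rw [hv]; positivity
    have hv1 : v ≤ 1 := by rw [hv, div_le_one hs]; exact h
    have e : 2 / s ^ 2 * ω ^ 2 = 2 * v ^ 2 := by rw [hv]; field_simp
    rw [e, ← hv]
    have h1 := Real.sin_le hv0
    have h2 : v - v ^ 3 / 6 ≤ Real.sin v := by
      rcases hv0.eq_or_lt with h0 | h0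
      · simp [← h0]
      · exact (Real.sin_gt_sub_cube h0).le
    have h3 : v ^ 3 ≤ v ^ 2 := by nlinarith [sq_nonneg v]
    rw [abs_le]; constructor <;> nlinarith [sq_nonneg v]
  · rw [min_eq_right h]
    have e : 2 / s ^ 2 * s ^ 2 = 2 := by field_simp
    rw [e, div_self hs.ne', abs_le]
    constructor <;> linarith [Real.sin_le_one (ω / s), Real.neg_one_le_sin (ω / s)]

lemma sin_clamp_le {s : ℝ} (hs : 0 < s) (ω : ℝ) :
    |Real.sin (ω / s) - (min (max ω 0) s - min (max (-ω) 0) s) / s|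
      ≤ 2 / s ^ 2 * min |ω| s ^ 2 := by
  rcases le_total 0 ω with h | h
  · have := sin_clamp_le_of_nonneg hs h
    rw [max_eq_left h, max_eq_right (by linarith), abs_of_nonneg h, min_eq_left hs.le, sub_zero]
    exact this
  · have := sin_clamp_le_of_nonneg hs (neg_nonneg.2 h)
    rw [max_eq_right h, max_eq_left (by linarith), abs_of_nonpos h, min_eq_left hs.le, zero_sub]
    rw [neg_div, Real.sin_neg, ← abs_neg] at this
    convert this using 2
    ring

lemma one_sub_cos_clamp_le {s : ℝ} (hs : 0 < s) (ω : ℝ) :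
    1 - Real.cos (ω / s) ≤ 2 / s ^ 2 * min |ω| s ^ 2 := by
  rcases le_total |ω| s with h | h
  · rw [min_eq_left h, sq_abs]
    have h1 := Real.one_sub_sq_div_two_le_cos (x := ω / s)
    have e : 2 / s ^ 2 * ω ^ 2 = 2 * (ω / s) ^ 2 := by field_simp
    rw [e]; nlinarith [sq_nonneg (ω / s)]
  · rw [min_eq_right h]
    have e : 2 / s ^ 2 * s ^ 2 = 2 := by field_simp
    rw [e]; linarith [Real.neg_one_le_cos (ω / s)]

lemma integrable_sin (u : ℝ) : Integrable (fun ω : ℝ => Real.sin (u * ω)) μ :=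
  Integrable.of_bound (C := 1) (by fun_prop)
    (Eventually.of_forall fun ω => by simpa using Real.abs_sin_le_one _)

lemma integrable_cos (u : ℝ) : Integrable (fun ω : ℝ => Real.cos (u * ω)) μ :=
  Integrable.of_bound (C := 1) (by fun_prop)
    (Eventually.of_forall fun ω => by simpa using Real.abs_cos_le_one _)

lemma one_sub_charF (u : ℝ) :
    (1 - charF μ u).re = ∫ ω, (1 - Real.cos (u * ω)) ∂μ ∧
      (1 - charF μ u).im = -∫ ω, Real.sin (u * ω) ∂μ := by
  have hi : Integrable (fun ω : ℝ => Complex.exp (Complex.I * u * ω)) μ := by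
    refine Integrable.of_bound (C := 1) (by fun_prop) (Eventually.of_forall fun ω => ?_)
    rw [show Complex.I * u * ω = ((u * ω : ℝ) : ℂ) * Complex.I by push_cast; ring,
      Complex.norm_exp_ofReal_mul_I]
  have e : ∀ ω : ℝ, Complex.exp (Complex.I * u * ω)
      = Complex.exp (((u * ω : ℝ) : ℂ) * Complex.I) := fun ω => by
    congr 1; push_cast; ring
  have h1 := Complex.reCLM.integral_comp_comm hi
  have h2 := Complex.imCLM.integral_comp_comm hi
  simp only [e, Complex.reCLM_apply, Complex.imCLM_apply, Complex.exp_ofReal_mul_I_re,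
    Complex.exp_ofReal_mul_I_im] at h1 h2
  unfold charF
  simp only [e]
  rw [Complex.sub_re, Complex.sub_im, ← h1, ← h2, integral_sub (integrable_const _)
    (integrable_cos μ u)]
  simp

/-- `c(s) = E[1 - cos(X/s)]`, written through `kcos`; see `cosInt_eq`. -/
noncomputable def cosInt (s : ℝ) : ℝ := ∫ ω, kcos (s / |ω|) ∂μ

lemma cosInt_eq (s : ℝ) : cosInt μ s = ∫ ω, (1 - Real.cos (s⁻¹ * ω)) ∂μ := by
  unfold cosInt kcos
  congr 1; ext ω
  rw [inv_div, div_eq_inv_mul, ← Real.cos_abs (s⁻¹ * ω), abs_mul]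
  rcases le_total 0 s with h | h
  · rw [abs_of_nonneg (inv_nonneg.2 h)]
  · rw [abs_of_nonpos (inv_nonpos.2 h), neg_mul, Real.cos_neg]

lemma cosInt_nonneg (s : ℝ) : 0 ≤ cosInt μ s := integral_nonneg fun _ => kcos_kernel.nonneg _

lemma integral_kind_eq {s : ℝ} (hs : 0 < s) : ∫ ω, kind (s / |ω|) ∂μ = Hf μ s := by
  rw [Hf_eq_integral]
  congr 1; ext ω
  unfold kind
  by_cases h : ω = 0
  · simp [h, hs.not_gt, indicator]
  · have h0 : 0 < |ω| := abs_pos.2 h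
    simp only [indicator, mem_Ioo, div_lt_one h0, div_pos hs h0, true_and, mem_ofPred_eq,
      Pi.one_apply]

lemma re_inv_one_sub_charF (u : ℝ) : ((1 - charF μ u)⁻¹).re
    = (∫ ω, (1 - Real.cos (u * ω)) ∂μ) /
      ((∫ ω, (1 - Real.cos (u * ω)) ∂μ) ^ 2 + (∫ ω, Real.sin (u * ω) ∂μ) ^ 2) := by
  obtain ⟨h1, h2⟩ := one_sub_charF μ u
  rw [Complex.inv_re, Complex.normSq_apply, h1, h2]
  congr 1; ring

lemma re_inv_nonneg (u : ℝ) : 0 ≤ ((1 - charF μ u)⁻¹).re := by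
  rw [re_inv_one_sub_charF]
  exact div_nonneg (integral_nonneg fun ω => by
    simp only [Pi.zero_apply]; linarith [Real.cos_le_one (u * ω)]) (by positivity)

lemma cosInt_le {s : ℝ} (hs : 0 < s) : cosInt μ s ≤ 2 / s ^ 2 * truncVar μ s := by
  rw [cosInt_eq, truncVar, ← integral_const_mul]
  refine integral_mono ((integrable_const _).sub (integrable_cos μ _))
    ((integrable_min_sq μ hs.le).const_mul _) fun ω => ?_
  have := one_sub_cos_clamp_le hs ω
  rw [div_eq_inv_mul ω s] at this
  exact this

lemma sinInt_sub_le {s : ℝ} (hs : 0 < s) :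
    |(∫ ω, Real.sin (s⁻¹ * ω) ∂μ) - Af μ s / s| ≤ 2 / s ^ 2 * truncVar μ s := by
  have hi : Integrable (fun ω => (min (max ω 0) s - min (max (-ω) 0) s) / s) μ := by
    refine Integrable.div_const (Integrable.sub ?_ ?_) s
    all_goals
      refine Integrable.of_bound (C := s) (by fun_prop) (Eventually.of_forall fun ω => ?_)
      rw [Real.norm_of_nonneg (le_min (le_max_right _ _) hs.le)]
      exact min_le_right _ _
  rw [Af_eq μ hs.le, ← integral_div, ← integral_sub (integrable_sin μ _) hi, truncVar,
    ← integral_const_mul]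
  refine (abs_integral_le_integral_abs).trans (integral_mono ((integrable_sin μ _).sub hi).abs
    ((integrable_min_sq μ hs.le).const_mul _) fun ω => ?_)
  have := sin_clamp_le hs ω
  rw [div_eq_inv_mul ω s] at this
  exact this

variable {μ}

/-- `s⁻² C(1/s) ~ c(s)/A(s)²`. The ratio is `(a² + b²)⁻¹` where `a = s c(s)/A(s) → 0` and
`b = s E[sin(X/s)]/A(s) → 1`. -/
lemma HaCond.re_inv_asymp (h : HaCond μ) {η : ℝ} (hη : 0 < η) :
    ∀ᶠ s in atTop, |(s ^ 2)⁻¹ * ((1 - charF μ s⁻¹)⁻¹).re - (Af μ s ^ 2)⁻¹ * cosInt μ s|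
      ≤ η * ((Af μ s ^ 2)⁻¹ * cosInt μ s) := by
  obtain ⟨x₁, hP⟩ := h.slowInc.exists_potter
  have hV := h.tendsto_truncVar.const_mul 2
  rw [mul_zero] at hV
  have hc : Tendsto (fun s => cosInt μ s / (Af μ s / s)) atTop (𝓝 0) := by
    refine tendsto_of_tendsto_of_tendsto_of_le_of_le' tendsto_const_nhds hV ?_ ?_
    · filter_upwards [eventually_ge_atTop x₁] with s hs
      have := hP.2.1 s hs
      have h0 : 0 < s := hP.1.trans_le hs
      exact div_nonneg (cosInt_nonneg μ s) (by positivity)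
    · filter_upwards [eventually_ge_atTop x₁] with s hs
      have := hP.2.1 s hs
      have h0 : 0 < s := hP.1.trans_le hs
      rw [div_le_iff₀ (by positivity)]
      refine (cosInt_le μ h0).trans_eq ?_
      field_simp
  have hb : Tendsto (fun s => (∫ ω, Real.sin (s⁻¹ * ω) ∂μ) / (Af μ s / s)) atTop (𝓝 1) := by
    rw [← tendsto_sub_nhds_zero_iff]
    refine squeeze_zero_norm' ?_ hV
    filter_upwards [eventually_ge_atTop x₁] with s hs
    have := hP.2.1 s hs
    have h0 : 0 < s := hP.1.trans_le hs
    have ha : 0 < Af μ s / s := by positivity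
    rw [div_sub_one ha.ne', norm_div, Real.norm_of_nonneg ha.le, div_le_iff₀ ha]
    refine (sinInt_sub_le μ h0).trans_eq ?_
    field_simp
  have hsum := ((hc.pow 2).add (hb.pow 2)).inv₀ (by norm_num)
  simp only [ne_eq, OfNat.ofNat_ne_zero, not_false_eq_true, zero_pow, one_pow, zero_add,
    inv_one] at hsum
  filter_upwards [(Metric.tendsto_nhds.1 hsum) η hη, eventually_ge_atTop x₁] with s h1 hs
  have hA := hP.2.1 s hs
  have h0 : 0 < s := hP.1.trans_le hs
  rw [re_inv_one_sub_charF, ← cosInt_eq]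
  rw [Real.dist_eq] at h1
  have hcA : 0 ≤ (Af μ s ^ 2)⁻¹ * cosInt μ s := mul_nonneg (by positivity) (cosInt_nonneg μ s)
  have key : (s ^ 2)⁻¹ * (cosInt μ s / (cosInt μ s ^ 2 + (∫ ω, Real.sin (s⁻¹ * ω) ∂μ) ^ 2))
      = ((cosInt μ s / (Af μ s / s)) ^ 2 + ((∫ ω, Real.sin (s⁻¹ * ω) ∂μ) / (Af μ s / s)) ^ 2)⁻¹
        * ((Af μ s ^ 2)⁻¹ * cosInt μ s) := by
    rw [div_pow (cosInt μ s), div_pow (∫ ω, Real.sin (s⁻¹ * ω) ∂μ), ← add_div, inv_div, div_pow]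
    simp only [div_eq_mul_inv]
    field_simp
  rw [key, ← sub_one_mul, abs_mul, abs_of_nonneg hcA]
  exact mul_le_mul_of_nonneg_right h1.le hcA

end charfun

/-! ### Lower bound for the tail integral and the main comparison -/

section tailint
variable (μ : Measure ℝ) [IsProbabilityMeasure μ]

/-- `R(x) = ∫_x^∞ H(s)/A(s)² ds`, as an element of `[0, ∞]`. -/
noncomputable def tailInt (x : ℝ) : ENNReal :=
  ∫⁻ s in Ioi x, ENNReal.ofReal ((Af μ s ^ 2)⁻¹ * Hf μ s)

variable {μ}

lemma lintegral_Hf_eq_top (hmean : ∫⁻ x, ENNReal.ofReal |x| ∂μ = ⊤) {x : ℝ} (hx : 0 ≤ x) :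
    ∫⁻ s in Ioi x, ENNReal.ofReal (Hf μ s) = ⊤ := by
  have h := lintegral_eq_lintegral_meas_lt μ (f := fun x : ℝ => |x|)
    (Eventually.of_forall fun x => abs_nonneg x) (by fun_prop)
  have e : ∀ t : ℝ, μ {a : ℝ | t < |a|} = ENNReal.ofReal (Hf μ t) := fun t =>
    (ENNReal.ofReal_toReal (measure_ne_top _ _)).symm
  simp only [e] at h
  rw [hmean, ← Ioc_union_Ioi_eq_Ioi hx, lintegral_union measurableSet_Ioi
    (Ioc_disjoint_Ioi le_rfl)] at h
  have hf : ∫⁻ s in Ioc 0 x, ENNReal.ofReal (Hf μ s) ≠ ⊤ := by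
    refine ne_top_of_le_ne_top (b := ∫⁻ s in Ioc 0 x, 1) (by simp) (lintegral_mono fun s => ?_)
    exact ENNReal.ofReal_le_one.2 (Hf_le_one μ s)
  by_contra hne
  exact ENNReal.add_ne_top.2 ⟨hf, hne⟩ h.symm

lemma tailInt_ge {x : ℝ} (hpos : ∀ y ≥ x, 0 < Af μ y) {D : Set ℝ} (hD : MeasurableSet D)
    (hDx : D ⊆ Ioi x) (hA : ∀ t ∈ D, Af μ t ≤ 2 * Af μ x) :
    ENNReal.ofReal ((4 * Af μ x ^ 2)⁻¹) * ∫⁻ s in D, ENNReal.ofReal (Hf μ s) ≤ tailInt μ x := by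
  rw [← lintegral_const_mul' _ _ ENNReal.ofReal_ne_top]
  refine le_trans ?_ (lintegral_mono_set hDx)
  refine setLIntegral_mono' hD fun s hs => ?_
  rw [← ENNReal.ofReal_mul (by positivity)]
  refine ENNReal.ofReal_le_ofReal (mul_le_mul_of_nonneg_right ?_ (Hf_nonneg μ s))
  have h1 := hpos s (hDx hs).le
  have h2 := hA s hs
  refine inv_anti₀ (by positivity) ?_
  nlinarith

/-- This is the only place where `E|X| = ∞` is used. -/
lemma inv_Af_le (hmean : ∫⁻ x, ENNReal.ofReal |x| ∂μ = ⊤) {x : ℝ} (hx : 0 < x)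
    (hpos : ∀ y ≥ x, 0 < Af μ y) : ENNReal.ofReal (Af μ x)⁻¹ ≤ 4 * tailInt μ x := by
  have hA := hpos x le_rfl
  by_cases hy : ∃ y ≥ x, 2 * Af μ x ≤ Af μ y
  -- `y` is the first point beyond `x` at which `A` reaches `2 A(x)`
  · obtain ⟨y, hyS⟩ : ∃ y, y = sInf (Ici x ∩ {t | 2 * Af μ x ≤ Af μ t}) := ⟨_, rfl⟩
    have hbdd : BddBelow (Ici x ∩ {t | 2 * Af μ x ≤ Af μ t}) := ⟨x, fun t ht => ht.1⟩
    have hmem : y ∈ Ici x ∩ {t | 2 * Af μ x ≤ Af μ t} := by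
      rw [hyS]
      refine IsClosed.csInf_mem ?_ ?_ hbdd
      · exact isClosed_Ici.inter (isClosed_le continuous_const (Af_continuous μ))
      · obtain ⟨z, hz⟩ := hy; exact ⟨z, hz⟩
    have hxy : x ≤ y := hmem.1
    have h2 : 2 * Af μ x ≤ Af μ y := hmem.2
    have hlt : ∀ t ∈ Ioo x y, Af μ t ≤ 2 * Af μ x := fun t ht => by
      by_contra hcon
      have := csInf_le hbdd (show t ∈ _ from ⟨ht.1.le, (not_le.1 hcon).le⟩)
      rw [← hyS] at this
      exact absurd ht.2 this.not_gt
    have hg := tailInt_ge hpos measurableSet_Ioo Ioo_subset_Ioi_self hlt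
    have hHi : IntegrableOn (Hf μ) (Ioc x y) :=
      ((Hf_antitone μ).intervalIntegrable (a := x) (b := y)).1
    have hI : ENNReal.ofReal (Af μ x) ≤ ∫⁻ s in Ioo x y, ENNReal.ofReal (Hf μ s) := by
      rw [setLIntegral_congr Ioo_ae_eq_Ioc, ← ofReal_integral_eq_lintegral_ofReal hHi
        (Eventually.of_forall fun s => Hf_nonneg μ s), ← intervalIntegral.integral_of_le hxy]
      refine ENNReal.ofReal_le_ofReal ?_
      have h3 := Af_sub μ x y
      have h4 : ∫ t in x..y, Kf μ t ≤ ∫ t in x..y, Hf μ t :=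
        intervalIntegral.integral_mono_on hxy (Kf_intervalIntegrable μ x y)
          (Hf_antitone μ).intervalIntegrable fun t ht =>
            (le_abs_self _).trans (abs_Kf_le μ (hx.le.trans ht.1))
      linarith
    calc ENNReal.ofReal (Af μ x)⁻¹
        = 4 * (ENNReal.ofReal ((4 * Af μ x ^ 2)⁻¹) * ENNReal.ofReal (Af μ x)) := by
          rw [← ENNReal.ofReal_mul (by positivity), show (4 : ENNReal) = ENNReal.ofReal 4 by simp,
            ← ENNReal.ofReal_mul (by positivity)]
          congr 1; field_simp
      _ ≤ 4 * tailInt μ x := by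
          gcongr
          refine le_trans ?_ hg
          gcongr
  · push Not at hy
    have hg := tailInt_ge hpos measurableSet_Ioi subset_rfl
      (fun t (ht : x < t) => (hy t ht.le).le)
    rw [lintegral_Hf_eq_top hmean hx.le, ENNReal.mul_top (by simp; positivity)] at hg
    rw [top_le_iff.1 hg]
    simp

/-- `∫_x^∞ s⁻² C(1/s) ds`, as an element of `[0, ∞]`. -/
noncomputable def reInt (μ : Measure ℝ) (x : ℝ) : ENNReal :=
  ∫⁻ s in Ioi x, ENNReal.ofReal ((s ^ 2)⁻¹ * ((1 - charF μ s⁻¹)⁻¹).re)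

/-- The asymptotic relation in `[0, ∞]`, valid whether or not the integrals converge. -/
lemma reInt_compare (hmean : ∫⁻ x, ENNReal.ofReal |x| ∂μ = ⊤) (h : HaCond μ)
    {δ : ℝ} (hδ : 0 < δ) (hδ1 : δ < 1) :
    ∃ x₁ > 0, (∀ x ≥ x₁, 0 < Af μ x) ∧ ∀ x ≥ x₁,
      reInt μ x ≤ ENNReal.ofReal ((1 + δ) * (Real.pi / 2)) * tailInt μ x ∧
      ENNReal.ofReal ((1 - δ) * (Real.pi / 2)) * tailInt μ x ≤ reInt μ x := by
  -- with `η = δ/8` the accumulated factors `(1 ± η)(π/2 ± 2η)` stay within `(1 ± δ) π/2`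
  obtain ⟨η, hηδ⟩ : ∃ η, η = δ / 8 := ⟨_, rfl⟩
  have hη : 0 < η := by rw [hηδ]; positivity
  have hη1 : η < 1 / 8 := by linarith
  obtain ⟨x₁, hP, C, hC, hcmp⟩ := lintegral_compare (A := Af μ) μ (Af_continuous μ).measurable
    h.slowInc hη (by linarith)
  have hV : ∀ᶠ x in atTop, truncVar μ x / (x * Af μ x) < η / (4 * (C + 1)) :=
    h.tendsto_truncVar.eventually_lt_const (by positivity)
  obtain ⟨x₂, hx₂⟩ := eventually_atTop.1 (hV.and (h.re_inv_asymp hη))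
  refine ⟨max x₁ x₂, lt_max_of_lt_left hP.1, fun x hx => hP.2.1 x ((le_max_left _ _).trans hx),
    fun x hx => ?_⟩
  have hx1 : x₁ ≤ x := (le_max_left _ _).trans hx
  have hx2 : x₂ ≤ x := (le_max_right _ _).trans hx
  have hx0 : 0 < x := hP.1.trans_le hx1
  have hA := hP.2.1 x hx1
  have hkind : ∫⁻ s in Ioi x, ENNReal.ofReal ((Af μ s ^ 2)⁻¹ * ∫ ω, kind (s / |ω|) ∂μ)
      = tailInt μ x :=
    setLIntegral_congr_fun measurableSet_Ioi fun s hs => by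
      simp only [integral_kind_eq μ (hx0.trans hs)]
  obtain ⟨hup, hlo⟩ := hcmp x hx1
  rw [hkind] at hup hlo
  have herr : ENNReal.ofReal (C * ((Af μ x ^ 2)⁻¹ / x) * truncVar μ x)
      ≤ ENNReal.ofReal η * tailInt μ x := by
    calc ENNReal.ofReal (C * ((Af μ x ^ 2)⁻¹ / x) * truncVar μ x)
        ≤ ENNReal.ofReal (η / 4 * (Af μ x)⁻¹) := by
          refine ENNReal.ofReal_le_ofReal ?_
          have h1 := (hx₂ x hx2).1.le
          have h2 : C * ((Af μ x ^ 2)⁻¹ / x) * truncVar μ x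
              = C * (truncVar μ x / (x * Af μ x)) * (Af μ x)⁻¹ := by field_simp
          rw [h2]
          refine mul_le_mul_of_nonneg_right ?_ (by positivity)
          calc C * (truncVar μ x / (x * Af μ x)) ≤ (C + 1) * (η / (4 * (C + 1))) := by
                refine mul_le_mul (by linarith) h1 ?_ (by positivity)
                exact div_nonneg (truncVar_nonneg x) (by positivity)
            _ = η / 4 := by field_simp
      _ = ENNReal.ofReal (η / 4) * ENNReal.ofReal (Af μ x)⁻¹ :=
          ENNReal.ofReal_mul (by positivity)
      _ ≤ ENNReal.ofReal (η / 4) * (4 * tailInt μ x) := by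
          gcongr
          exact inv_Af_le hmean hx0 fun y hy => hP.2.1 y (hx1.trans hy)
      _ = ENNReal.ofReal η * tailInt μ x := by
          rw [← mul_assoc, show (4 : ENNReal) = ENNReal.ofReal 4 by simp,
            ← ENNReal.ofReal_mul (by positivity)]
          congr 2; ring
  change (∫⁻ s in Ioi x, ENNReal.ofReal ((Af μ s ^ 2)⁻¹ * cosInt μ s)) ≤ _ at hup
  change _ ≤ (∫⁻ s in Ioi x, ENNReal.ofReal ((Af μ s ^ 2)⁻¹ * cosInt μ s)) + _ at hlo
  obtain ⟨L, hL⟩ : ∃ L, L = ∫⁻ s in Ioi x, ENNReal.ofReal ((Af μ s ^ 2)⁻¹ * cosInt μ s) :=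
    ⟨_, rfl⟩
  rw [← hL] at hup hlo
  have hTL : reInt μ x ≤ ENNReal.ofReal (1 + η) * L := by
    rw [hL, ← lintegral_const_mul' _ _ ENNReal.ofReal_ne_top]
    refine setLIntegral_mono' measurableSet_Ioi fun s hs => ?_
    rw [← ENNReal.ofReal_mul (by positivity)]
    refine ENNReal.ofReal_le_ofReal ?_
    have := (abs_le.1 (hx₂ s (hx2.trans (le_of_lt hs))).2).2
    linarith
  have hLT : ENNReal.ofReal (1 - η) * L ≤ reInt μ x := by
    rw [hL, ← lintegral_const_mul' _ _ ENNReal.ofReal_ne_top]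
    refine setLIntegral_mono' measurableSet_Ioi fun s hs => ?_
    rw [← ENNReal.ofReal_mul (by linarith)]
    refine ENNReal.ofReal_le_ofReal ?_
    have := (abs_le.1 (hx₂ s (hx2.trans (le_of_lt hs))).2).1
    linarith
  have hpi := Real.pi_gt_three
  have hpi4 := Real.pi_le_four
  constructor
  · calc reInt μ x ≤ ENNReal.ofReal (1 + η) * L := hTL
      _ ≤ ENNReal.ofReal (1 + η) * (ENNReal.ofReal (Real.pi / 2 + η) * tailInt μ x
            + ENNReal.ofReal η * tailInt μ x) := by gcongr; exact hup.trans (by gcongr)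
      _ = ENNReal.ofReal ((1 + η) * (Real.pi / 2 + η + η)) * tailInt μ x := by
          rw [← add_mul, ← ENNReal.ofReal_add (by positivity) hη.le, ← mul_assoc,
            ← ENNReal.ofReal_mul (by positivity)]
      _ ≤ _ := by
          gcongr ENNReal.ofReal ?_ * _
          have : δ = 8 * η := by linarith
          rw [this]
          nlinarith
  · have hlo' : ENNReal.ofReal (Real.pi / 2 - η - η) * tailInt μ x ≤ L := by
      by_cases hR : tailInt μ x = ⊤
      · rw [hR, ENNReal.mul_top (by simp; linarith)] at hlo
        have : L = ⊤ := by
          by_contra hne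
          exact ENNReal.add_ne_top.2 ⟨hne, ENNReal.ofReal_ne_top⟩ (top_le_iff.1 hlo)
        rw [this]; exact le_top
      -- the finite term `η R(x)` cancels
      · have hfin : ENNReal.ofReal η * tailInt μ x ≠ ⊤ := ENNReal.mul_ne_top ENNReal.ofReal_ne_top hR
        refine (ENNReal.add_le_add_iff_right hfin).1 ?_
        rw [← add_mul, ← ENNReal.ofReal_add (by linarith) hη.le, sub_add_cancel]
        exact hlo.trans (by gcongr)
    calc ENNReal.ofReal ((1 - δ) * (Real.pi / 2)) * tailInt μ x
        ≤ ENNReal.ofReal ((1 - η) * (Real.pi / 2 - η - η)) * tailInt μ x := by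
          gcongr ENNReal.ofReal ?_ * _
          have : δ = 8 * η := by linarith
          rw [this]
          nlinarith
      _ = ENNReal.ofReal (1 - η) * (ENNReal.ofReal (Real.pi / 2 - η - η) * tailInt μ x) := by
          rw [← mul_assoc, ← ENNReal.ofReal_mul (by linarith)]
      _ ≤ ENNReal.ofReal (1 - η) * L := by gcongr
      _ ≤ _ := hLT

end tailint

/-! ### Regularity of `C` away from `0` -/

section regular
variable {μ : Measure ℝ} [IsProbabilityMeasure μ]

lemma charF_continuous : Continuous (charF μ) := by
  have e : charF μ = charFun μ := by
    ext θ
    rw [charFun_apply_real, charF]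
    congr 1; ext x
    congr 1; ring
  rw [e]
  exact continuous_charFun

/-- If `φ(θ) = 1` then `cos(θX) = 1` almost surely, so `X` lives on `(2π/θ)ℤ`. -/
lemma charF_ne_one (harith : ¬ IsArith μ) {θ : ℝ} (hθ : 0 < θ) : 1 - charF μ θ ≠ 0 := by
  intro h0
  have h1 := (one_sub_charF μ θ).1
  rw [h0, Complex.zero_re] at h1
  have h2 := (integral_eq_zero_iff_of_nonneg (μ := μ) (f := fun ω : ℝ => 1 - Real.cos (θ * ω))
    (fun ω => by simp only [Pi.zero_apply]; linarith [Real.cos_le_one (θ * ω)])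
    ((integrable_const _).sub (integrable_cos μ θ))).1 h1.symm
  refine harith ⟨2 * Real.pi / θ, by positivity, ?_⟩
  have hm : ∀ᵐ x ∂μ, x ∈ {x : ℝ | ∃ n : ℤ, x = n * (2 * Real.pi / θ)} := by
    filter_upwards [h2] with ω hω
    have h3 : Real.cos (θ * ω) = 1 := by simp only [Pi.zero_apply] at hω; linarith
    obtain ⟨n, hn⟩ := (Real.cos_eq_one_iff _).1 h3
    refine ⟨n, ?_⟩
    field_simp
    linarith
  exact (measure_congr (eventuallyEq_univ.2 hm)).trans measure_univ

lemma re_inv_measurable : Measurable fun θ => ((1 - charF μ θ)⁻¹).re :=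
  Complex.measurable_re.comp (measurable_const.sub charF_continuous.measurable).inv

lemma re_inv_integrableOn (harith : ¬ IsArith μ) {a b : ℝ} (ha : 0 < a) :
    IntegrableOn (fun θ => ((1 - charF μ θ)⁻¹).re) (Ioc a b) := by
  refine IntegrableOn.mono_set (ContinuousOn.integrableOn_Icc fun θ hθ => ?_) Ioc_subset_Icc_self
  refine ContinuousAt.continuousWithinAt ?_
  exact Complex.continuous_re.continuousAt.comp ((continuous_const.sub
    charF_continuous).continuousAt.inv₀ (charF_ne_one harith (ha.trans_le hθ.1)))

end regular

/-! ### Change of variables and conclusion -/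

section final
variable {μ : Measure ℝ} [IsProbabilityMeasure μ]

lemma lintegral_re_inv_eq {θ : ℝ} (hθ : 0 < θ) :
    ∫⁻ u in Ioc 0 θ, ENNReal.ofReal ((1 - charF μ u)⁻¹).re = reInt μ (1 / θ) := by
  have himg : Inv.inv '' Ioi (1 / θ) = Ioo 0 θ := by
    ext u
    simp only [mem_image, mem_Ioi, mem_Ioo, one_div]
    constructor
    · rintro ⟨s, hs, rfl⟩
      exact ⟨inv_pos.2 ((inv_pos.2 hθ).trans hs), inv_lt_of_inv_lt₀ hθ hs⟩
    · rintro ⟨h0, h1⟩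
      exact ⟨u⁻¹, inv_strictAnti₀ h0 h1, inv_inv u⟩
  rw [← setLIntegral_congr Ioo_ae_eq_Ioc, ← himg, lintegral_inv_image _ measurableSet_Ioi
    (Ioi_subset_Ioi (by positivity)), reInt]
  refine setLIntegral_congr_fun measurableSet_Ioi fun s hs => ?_
  rw [← ENNReal.ofReal_mul (by positivity)]

lemma integrableOn_re_inv_iff {θ : ℝ} (hθ : 0 < θ) :
    IntegrableOn (fun θ => ((1 - charF μ θ)⁻¹).re) (Ioc 0 θ) ↔ reInt μ (1 / θ) < ⊤ := by
  rw [← lintegral_re_inv_eq hθ, IntegrableOn, Integrable,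
    hasFiniteIntegral_iff_ofReal (Eventually.of_forall fun u => re_inv_nonneg μ u)]
  exact and_iff_right re_inv_measurable.aestronglyMeasurable

lemma integrableOn_Hf_div_iff (x : ℝ) :
    IntegrableOn (fun x => Hf μ x / (Af μ x) ^ 2) (Ioi x) ↔ tailInt μ x < ⊤ := by
  rw [IntegrableOn, Integrable, hasFiniteIntegral_iff_ofReal
    (Eventually.of_forall fun u => div_nonneg (Hf_nonneg μ u) (sq_nonneg _)), tailInt]
  simp only [div_eq_inv_mul]
  refine and_iff_right (Measurable.aestronglyMeasurable ?_)
  exact ((Af_continuous μ).measurable.pow_const 2).inv.mul (Hf_antitone μ).measurable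

lemma integral_re_inv_eq {θ : ℝ} (hθ : 0 < θ) :
    ∫ u in (0:ℝ)..θ, ((1 - charF μ u)⁻¹).re = (reInt μ (1 / θ)).toReal := by
  rw [intervalIntegral.integral_of_le hθ.le, ← lintegral_re_inv_eq hθ,
    integral_eq_lintegral_of_nonneg_ae (Eventually.of_forall fun u => re_inv_nonneg μ u)
      re_inv_measurable.aestronglyMeasurable]

lemma integral_Hf_div_eq (x : ℝ) :
    ∫ t in Ioi x, Hf μ t / (Af μ t) ^ 2 = (tailInt μ x).toReal := by
  rw [integral_eq_lintegral_of_nonneg_ae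
    (Eventually.of_forall fun u => div_nonneg (Hf_nonneg μ u) (sq_nonneg _)), tailInt]
  · simp only [div_eq_inv_mul]
  · simp only [div_eq_inv_mul]
    exact (((Af_continuous μ).measurable.pow_const 2).inv.mul
      (Hf_antitone μ).measurable).aestronglyMeasurable

lemma tailInt_antitone : Antitone (tailInt μ) := fun _ _ h => lintegral_mono_set (Ioi_subset_Ioi h)

lemma reInt_lt_top_iff (hmean : ∫⁻ x, ENNReal.ofReal |x| ∂μ = ⊤) (h : HaCond μ) :
    ∃ x₁ > 0, ∀ x ≥ x₁, reInt μ x < ⊤ ↔ tailInt μ x < ⊤ := by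
  obtain ⟨x₁, h0, -, hx⟩ := reInt_compare hmean h (δ := 1 / 2) (by norm_num) (by norm_num)
  have hpi := Real.pi_pos
  refine ⟨x₁, h0, fun x hxx => ⟨fun hT => ?_, fun hR => ?_⟩⟩
  · by_contra hR
    have h2 := (hx x hxx).2
    rw [not_lt_top_iff.1 hR, ENNReal.mul_top (by simp; linarith)] at h2
    exact (h2.trans_lt hT).ne rfl
  · exact (hx x hxx).1.trans_lt (ENNReal.mul_lt_top ENNReal.ofReal_lt_top hR)

/-- Only the behaviour near `0` matters for the integrability of `C`. -/
lemma integrableOn_re_inv_unit_iff (harith : ¬ IsArith μ) {θ : ℝ} (hθ : 0 < θ) (hθ1 : θ ≤ 1) :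
    IntegrableOn (fun θ => ((1 - charF μ θ)⁻¹).re) (Ioc 0 1) ↔
      IntegrableOn (fun θ => ((1 - charF μ θ)⁻¹).re) (Ioc 0 θ) := by
  rw [← Ioc_union_Ioc_eq_Ioc hθ.le hθ1, integrableOn_union]
  exact and_iff_left (re_inv_integrableOn harith hθ)

end final

/-- Under (Ha), for non-arithmetic `F`: `∫₀¹ C(θ) dθ < ∞` iff (Hb) holds, and in
that case `∫₀^θ C(u) du ∼ (π/2) ∫_{1/θ}^∞ H(x)/A²(x) dx` as `θ → 0+`, where
`C(θ) = Re(1/(1-φ(θ)))`. -/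
theorem stmt16 (μ : Measure ℝ) [IsProbabilityMeasure μ]
    (hmean : ∫⁻ x, ENNReal.ofReal |x| ∂μ = ⊤)
    (harith : ¬ IsArith μ)
    (hHa : HaCond μ) :
    (IntegrableOn (fun θ => ((1 - charF μ θ)⁻¹).re) (Set.Ioc (0:ℝ) 1) ↔
      ∃ x₀ : ℝ, 0 < x₀ ∧
        IntegrableOn (fun x => Hf μ x / (Af μ x) ^ 2) (Set.Ioi x₀)) ∧
    (IntegrableOn (fun θ => ((1 - charF μ θ)⁻¹).re) (Set.Ioc (0:ℝ) 1) →
      Tendsto (fun θ : ℝ =>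
          (∫ u in (0:ℝ)..θ, ((1 - charF μ u)⁻¹).re) /
            ((Real.pi / 2) * ∫ x in Set.Ioi (1 / θ), Hf μ x / (Af μ x) ^ 2))
        (𝓝[>] (0:ℝ)) (𝓝 1)) := by
  have hpi := Real.pi_pos
  obtain ⟨x₁, hx₁, hiff⟩ := reInt_lt_top_iff hmean hHa
  -- integrability of `C` on `(0, 1]` is decided on `(0, 1 / x]` for any large `x`
  have hC : ∀ x ≥ max x₁ 1, IntegrableOn (fun θ => ((1 - charF μ θ)⁻¹).re) (Ioc 0 1) ↔
      tailInt μ x < ⊤ := by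
    intro x hx
    have hx1 : 1 ≤ x := (le_max_right _ _).trans hx
    have hx0 : 0 < x := one_pos.trans_le hx1
    rw [integrableOn_re_inv_unit_iff harith (one_div_pos.2 hx0) ((div_le_one hx0).2 hx1),
      integrableOn_re_inv_iff (one_div_pos.2 hx0), one_div_one_div,
      hiff x ((le_max_left _ _).trans hx)]
  refine ⟨⟨fun h => ⟨max x₁ 1, by positivity, ?_⟩, ?_⟩, fun h => ?_⟩
  · rw [integrableOn_Hf_div_iff]
    exact (hC _ le_rfl).1 h
  · rintro ⟨x₀, -, h⟩
    rw [integrableOn_Hf_div_iff] at h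
    exact (hC _ (le_max_left _ x₀)).2 ((tailInt_antitone (le_max_right _ _)).trans_lt h)
  · rw [Metric.tendsto_nhds]
    intro ε hε
    obtain ⟨δ, hδε, hδ, hδ1⟩ : ∃ δ, δ < ε ∧ 0 < δ ∧ δ < 1 := by
      obtain ⟨δ, h1, h2⟩ := exists_between (lt_min hε one_pos)
      exact ⟨δ, h2.trans_le (min_le_left _ _), h1, h2.trans_le (min_le_right _ _)⟩
    obtain ⟨x₂, hx₂, hpos, hcmp⟩ := reInt_compare hmean hHa hδ hδ1
    have hlim : Tendsto (fun θ : ℝ => 1 / θ) (𝓝[>] 0) atTop := by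
      simpa only [one_div] using tendsto_inv_nhdsGT_zero (𝕜 := ℝ)
    filter_upwards [hlim.eventually_ge_atTop (max x₁ 1), hlim.eventually_ge_atTop x₂,
      self_mem_nhdsWithin] with θ h1 h2 (hθ : 0 < θ)
    have hR := (hC _ h1).1 h
    obtain ⟨hup, hlo⟩ := hcmp _ h2
    rw [integral_re_inv_eq hθ, integral_Hf_div_eq]
    have hT : reInt μ (1 / θ) < ⊤ := (hiff _ ((le_max_left _ _).trans h1)).2 hR
    have hA := hpos _ h2
    have hRpos : 0 < (tailInt μ (1 / θ)).toReal := by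
      refine ENNReal.toReal_pos (fun h0 => ?_) hR.ne
      have := inv_Af_le hmean (one_div_pos.2 hθ) fun y hy => hpos y (h2.trans hy)
      rw [h0, mul_zero, nonpos_iff_eq_zero, ENNReal.ofReal_eq_zero] at this
      exact absurd (inv_pos.2 hA) this.not_gt
    have hup' := ENNReal.toReal_mono (ENNReal.mul_ne_top ENNReal.ofReal_ne_top hR.ne) hup
    have hlo' := ENNReal.toReal_mono hT.ne hlo
    rw [ENNReal.toReal_mul, ENNReal.toReal_ofReal (by positivity)] at hup'
    rw [ENNReal.toReal_mul, ENNReal.toReal_ofReal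
      (mul_nonneg (by linarith) (by positivity))] at hlo'
    have hden : 0 < Real.pi / 2 * (tailInt μ (1 / θ)).toReal := by positivity
    rw [Real.dist_eq]
    refine lt_of_le_of_lt ?_ hδε
    rw [abs_le]
    constructor
    · rw [le_sub_iff_add_le, le_div_iff₀ hden]
      linarith
    · rw [sub_le_iff_le_add, div_le_iff₀ hden]
      linarith
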